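/- arXiv:1808.03615 — 2 statements merged into one kernel-verified Lean document; each statement's English description precedes it below -/
import Mathlib

section
/- If V_* is a Steiner triple system, then there is an integer N such that for every integer u with u ≥ N and u ≡ 1 or 3 (mod 6), there are at least ⌊u / (2^{145}·|V_*|^{25})⌋! pairwise nonisomorphic Steiner triple systems U on u points, each having a subsystem isomorphic to V_* that is invariant under Aut U, on which Aut U induces the full automorphism group and with Aut U ≅ Aut V_*. -/
open Finset

noncomputable section
open scoped Classical

/-- `T` is the set of triples of a Steiner triple system on the finite type `α`:
every pair of distinct points lies in exactly one triple. -/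
def IsSTS {α : Type*} (T : Finset (Finset α)) : Prop :=
  (∀ t ∈ T, t.card = 3) ∧
    ∀ p q : α, p ≠ q → ∃! t : Finset α, t ∈ T ∧ p ∈ t ∧ q ∈ t

/-- `T` is the set of triples of a partial Steiner triple system on `α`:
every pair of distinct points lies in at most one triple. -/
def IsPSTS {α : Type*} (T : Finset (Finset α)) : Prop :=
  (∀ t ∈ T, t.card = 3) ∧
    ∀ p q : α, p ≠ q → ∀ t₁ ∈ T, ∀ t₂ ∈ T, p ∈ t₁ → q ∈ t₁ → p ∈ t₂ → q ∈ t₂ → t₁ = t₂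

/-- `W` is a (closed) subsystem of the triple system `T`. -/
def IsSub {α : Type*} (T : Finset (Finset α)) (W : Finset α) : Prop :=
  ∀ t ∈ T, 2 ≤ (t ∩ W).card → t ⊆ W

/-- `g` is an automorphism of the triple system `T`. -/
def IsAut {α : Type*} (T : Finset (Finset α)) (g : Equiv.Perm α) : Prop :=
  ∀ t : Finset α, t ∈ T ↔ t.image g ∈ T

/-- The automorphism group of a triple system, as a subgroup of the permutation group. -/
def autGroup {α : Type*} (T : Finset (Finset α)) : Subgroup (Equiv.Perm α) where
  carrier := {g : Equiv.Perm α | IsAut T g}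
  one_mem' := by
    intro t
    simp
  mul_mem' := by
    intro a b ha hb t
    have h1 := hb t
    have h2 := ha (t.image b)
    have key : t.image ⇑(a * b) = (t.image ⇑b).image ⇑a := by
      rw [Equiv.Perm.coe_mul, Finset.image_image]
    rw [key, ← h2]
    exact h1
  inv_mem' := by
    intro a ha t
    have h := ha (t.image ⇑a⁻¹)
    have key : (t.image ⇑a⁻¹).image ⇑a = t := by
      rw [Finset.image_image]
      have hc : (⇑a ∘ ⇑a⁻¹) = id := by
        funext x
        simp
      rw [hc, Finset.image_id]
    rw [key] at h
    exact h.symm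

/-- `φ` embeds the triple system `S` onto a subsystem of `T`: it is injective, maps
triples of `S` to triples of `T`, and the triples of `T` inside the image of `φ` are
precisely the images of the triples of `S`. -/
def IsCopy {α β : Type*} [Fintype α] (S : Finset (Finset α)) (T : Finset (Finset β))
    (φ : α → β) : Prop :=
  Function.Injective φ ∧ (∀ s ∈ S, s.image φ ∈ T) ∧
    ∀ t ∈ T, t ⊆ Finset.univ.image φ → ∃ s ∈ S, t = s.image φ

/-- The point set `W` is invariant under every automorphism of `T`. -/
def AutInvariant {β : Type*} (T : Finset (Finset β)) (W : Finset β) : Prop :=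
  ∀ g : Equiv.Perm β, IsAut T g → W.image g = W

/-- For the copy of `S` inside `T` given by `φ`, restriction gives a group isomorphism
from `Aut T` onto `Aut S`: every automorphism of `T` induces (via `φ`) an automorphism
of `S`, and every automorphism of `S` is induced by exactly one automorphism of `T`. -/
def AutRestrictIso {α β : Type*} (T : Finset (Finset β)) (S : Finset (Finset α))
    (φ : α → β) : Prop :=
  (∀ g : Equiv.Perm β, IsAut T g →
      ∃ h : Equiv.Perm α, IsAut S h ∧ ∀ x : α, g (φ x) = φ (h x)) ∧
    ∀ h : Equiv.Perm α, IsAut S h →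
      ∃! g : Equiv.Perm β, IsAut T g ∧ ∀ x : α, g (φ x) = φ (h x)

/-- `φ` embeds `S` as an `Aut T`-invariant subsystem of `T` on which `Aut T` induces
the full automorphism group of `S`, with `Aut T ≅ Aut S` via restriction. -/
def FullEmbedding {α β : Type*} [Fintype α] (S : Finset (Finset α)) (T : Finset (Finset β))
    (φ : α → β) : Prop :=
  IsCopy S T φ ∧ AutInvariant T (Finset.univ.image φ) ∧ AutRestrictIso T S φ

/-- The points of the projective space `PG(n,2)`: nonzero vectors of `GF(2)^{n+1}`. -/
abbrev PGPoint (n : ℕ) := {x : Fin (n + 1) → ZMod 2 // x ≠ 0}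

/-- The lines of `PG(n,2)`: 3-sets of nonzero vectors summing to `0`. -/
def PGTriples (n : ℕ) : Finset (Finset (PGPoint n)) :=
  Finset.univ.filter fun t : Finset (PGPoint n) =>
    t.card = 3 ∧ ∑ v ∈ t, (v : Fin (n + 1) → ZMod 2) = 0

/-- The smallest subsystem of `T` containing the point set `P`. -/
def GeneratedSub {α : Type*} [Fintype α] (T : Finset (Finset α)) (P : Finset α) : Finset α :=
  Finset.univ.filter fun x => ∀ W : Finset α, IsSub T W → P ⊆ W → x ∈ W

/-- `W` is a subsystem of `T` isomorphic to `PG(n,2)`. -/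
def IsPGSub {α : Type*} [Fintype α] (n : ℕ) (T : Finset (Finset α)) (W : Finset α) : Prop :=
  ∃ φ : PGPoint n → α, IsCopy (PGTriples n) T φ ∧ Finset.univ.image φ = W

/-- A triple system is `PG(2,2)`-paired if any two distinct points lie in at least two
subsystems isomorphic to `PG(2,2)`. -/
def PG22Paired {α : Type*} [Fintype α] (T : Finset (Finset α)) : Prop :=
  ∀ p q : α, p ≠ q → ∃ W₁ W₂ : Finset α, W₁ ≠ W₂ ∧
    (p ∈ W₁ ∧ q ∈ W₁ ∧ IsPGSub 2 T W₁) ∧ p ∈ W₂ ∧ q ∈ W₂ ∧ IsPGSub 2 T W₂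

/-- `T` is `PG(3,2)`-2-pointed with respect to the points `p, q`: any four points
including `p` and `q` generate a subsystem isomorphic to `PG(2,2)` or `PG(3,2)`. -/
def PG32TwoPointed {α : Type*} [Fintype α] (T : Finset (Finset α)) (p q : α) : Prop :=
  p ≠ q ∧ ∀ s : Finset α, s.card = 4 → p ∈ s → q ∈ s →
    IsPGSub 2 T (GeneratedSub T s) ∨ IsPGSub 3 T (GeneratedSub T s)

/-- The copy of `Y` inside `2Y+1`. -/
def dp0 {γ : Type*} (a : γ) : γ ⊕ γ ⊕ Unit := Sum.inl a

/-- The disjoint copy `Y₁` of `Y` inside `2Y+1`. -/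
def dp1 {γ : Type*} (a : γ) : γ ⊕ γ ⊕ Unit := Sum.inr (Sum.inl a)

/-- The extra point `*` of `2Y+1`. -/
def dpStar {γ : Type*} : γ ⊕ γ ⊕ Unit := Sum.inr (Sum.inr ())

/-- The triples of the Steiner triple system `2Y+1` built from a system `Y` with
triple set `T`. -/
def DoubleTriples {γ : Type*} [Fintype γ] (T : Finset (Finset γ)) :
    Finset (Finset (γ ⊕ γ ⊕ Unit)) :=
  Finset.univ.filter fun t : Finset (γ ⊕ γ ⊕ Unit) =>
    (∃ s ∈ T, t = s.image dp0) ∨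
    (∃ a : γ, t = {dpStar, dp0 a, dp1 a}) ∨
    (∃ a b c : γ, ({a, b, c} : Finset γ) ∈ T ∧ t = {dp1 a, dp1 b, dp0 c})

/-- The triples of the direct product of two triple systems. -/
def ProdTriples {α β : Type*} [Fintype α] [Fintype β]
    (TA : Finset (Finset α)) (TB : Finset (Finset β)) : Finset (Finset (α × β)) :=
  Finset.univ.filter fun t : Finset (α × β) =>
    (∃ a : α, ∃ s ∈ TB, t = s.image fun b => (a, b)) ∨
    (∃ b : β, ∃ s ∈ TA, t = s.image fun a => (a, b)) ∨
    (∃ a₁ a₂ a₃ : α, ∃ b₁ b₂ b₃ : β, ({a₁, a₂, a₃} : Finset α) ∈ TA ∧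
      ({b₁, b₂, b₃} : Finset β) ∈ TB ∧ t = {(a₁, b₁), (a₂, b₂), (a₃, b₃)})

/-- The triples of Moore's construction `U = X ∪ (V × A)`.  Here `TX` (on `δ`), `TV`
(on `α`), `TY` (on `γ`) are the triple sets of `X`, `V`, `Y`; `j : δ → γ` embeds `X`
as a subsystem of `Y` and `ℓ : A → γ` labels `Y − X` by the group `A`. -/
def MooreTriples {δ α γ A : Type*} [Fintype δ] [Fintype α] [Fintype A] [Group A]
    (TX : Finset (Finset δ)) (TV : Finset (Finset α)) (TY : Finset (Finset γ))
    (j : δ → γ) (ℓ : A → γ) : Finset (Finset (δ ⊕ α × A)) :=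
  Finset.univ.filter fun t : Finset (δ ⊕ α × A) =>
    (∃ s ∈ TX, t = s.image Sum.inl) ∨
    (∃ v : α, ∃ a₁ a₂ : A, ∃ x : δ, ({ℓ a₁, ℓ a₂, j x} : Finset γ) ∈ TY ∧
      t = {Sum.inr (v, a₁), Sum.inr (v, a₂), Sum.inl x}) ∨
    (∃ v : α, ∃ a₁ a₂ a₃ : A, ({ℓ a₁, ℓ a₂, ℓ a₃} : Finset γ) ∈ TY ∧
      t = {Sum.inr (v, a₁), Sum.inr (v, a₂), Sum.inr (v, a₃)}) ∨
    (∃ v₁ v₂ v₃ : α, ∃ a₁ a₂ a₃ : A, ({v₁, v₂, v₃} : Finset α) ∈ TV ∧ a₁ * a₂ * a₃ = 1 ∧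
      t = {Sum.inr (v₁, a₁), Sum.inr (v₂, a₂), Sum.inr (v₃, a₃)})

/-- The hypotheses of Moore's construction: `Y` and `V` are Steiner triple systems,
`A` is a cyclic group, `j` embeds `X` as a subsystem of `Y` (with triple set `TX`),
and `ℓ` is a bijective labeling of `Y − X` by `A`. -/
def MooreSetup {δ α γ A : Type*} [Fintype δ] [Group A]
    (TX : Finset (Finset δ)) (TV : Finset (Finset α)) (TY : Finset (Finset γ))
    (j : δ → γ) (ℓ : A → γ) : Prop :=
  IsSTS TY ∧ IsSTS TV ∧ IsCyclic A ∧ Function.Injective j ∧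
    IsSub TY (Finset.univ.image j) ∧ IsCopy TX TY j ∧
    Function.Injective ℓ ∧ Set.range ℓ = (Set.range j)ᶜ

/-- The subsystem `Y_v = X ∪ (v × A)` of Moore's construction. -/
def MooreY {δ α A : Type*} [Fintype δ] [Fintype A] (v : α) : Finset (δ ⊕ α × A) :=
  (Finset.univ.image (Sum.inl : δ → δ ⊕ α × A)) ∪
    Finset.univ.image fun a : A => (Sum.inr (v, a) : δ ⊕ α × A)

/-- A subsystem of type (3.1) of Moore's construction, where `ε` denotes the unique
involution `−1` of `A`: the seven points `x, (v_i, a_i), (v_i, −a_i)` for a triple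
`{v₁,v₂,v₃}` of `V`, with `a₁a₂a₃ = 1` and `{a_i, −a_i, x}` a triple of `Y`. -/
def MooreType31 {δ α γ A : Type*} [Group A] (TV : Finset (Finset α))
    (TY : Finset (Finset γ)) (j : δ → γ) (ℓ : A → γ) (ε : A)
    (W : Finset (δ ⊕ α × A)) : Prop :=
  ∃ v₁ v₂ v₃ : α, ∃ a₁ a₂ a₃ : A, ∃ x : δ,
    ({v₁, v₂, v₃} : Finset α) ∈ TV ∧ a₁ * a₂ * a₃ = 1 ∧
    ({ℓ a₁, ℓ (ε * a₁), j x} : Finset γ) ∈ TY ∧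
    ({ℓ a₂, ℓ (ε * a₂), j x} : Finset γ) ∈ TY ∧
    ({ℓ a₃, ℓ (ε * a₃), j x} : Finset γ) ∈ TY ∧
    W = {Sum.inl x, Sum.inr (v₁, a₁), Sum.inr (v₁, ε * a₁), Sum.inr (v₂, a₂),
         Sum.inr (v₂, ε * a₂), Sum.inr (v₃, a₃), Sum.inr (v₃, ε * a₃)}

/-- The point set of a family of triples. -/
def ptsOf {β : Type*} (T : Finset (Finset β)) : Finset β := T.sup id

/-- Adjacency of triples: two distinct triples of `T` meeting in a point. -/
def TriAdj {β : Type*} (T : Finset (Finset β)) (t s : Finset β) : Prop :=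
  t ∈ T ∧ s ∈ T ∧ t ≠ s ∧ (t ∩ s).Nonempty

/-- A partial Steiner triple system is cyclic if the graph whose vertices are its
triples, two joined when they meet, is a cycle (equivalently: it has at least three
triples, every triple meets exactly two others, and the graph is connected). -/
def IsCyclicPSTS {β : Type*} (T : Finset (Finset β)) : Prop :=
  3 ≤ T.card ∧ (∀ t ∈ T, (T.filter fun s => s ≠ t ∧ (s ∩ t).Nonempty).card = 2) ∧
    ∀ t ∈ T, ∀ s ∈ T, Relation.ReflTransGen (TriAdj T) t s

/-- The partial Steiner triple system `Q(z)` (for the parameter `n`), with triple set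
`T`, point set `P` and distinguished point `z`: two cyclic PSTSs `C₁, C₂` on
`2n+4` and `2n+6` points meeting exactly in the point `z`, which lies in two triples
of each, triples `{z, z'_i, z_i}` of `C_i` with `z'_i` in two triples of `C_i`, and a
new point `z'` in the single additional triple `{z'_1, z', z'_2}`. -/
def IsQ {β : Type*} (n : ℕ) (T : Finset (Finset β)) (P : Finset β) (z : β) : Prop :=
  ∃ C₁ C₂ : Finset (Finset β), ∃ z' z₁' z₂' z₁ z₂ : β,
    IsPSTS T ∧ IsCyclicPSTS C₁ ∧ IsCyclicPSTS C₂ ∧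
    (ptsOf C₁).card = 2 * n + 4 ∧ (ptsOf C₂).card = 2 * n + 6 ∧
    ptsOf C₁ ∩ ptsOf C₂ = {z} ∧
    (C₁.filter fun t => z ∈ t).card = 2 ∧ (C₂.filter fun t => z ∈ t).card = 2 ∧
    ({z, z₁', z₁} : Finset β) ∈ C₁ ∧ (C₁.filter fun t => z₁' ∈ t).card = 2 ∧
    ({z, z₂', z₂} : Finset β) ∈ C₂ ∧ (C₂.filter fun t => z₂' ∈ t).card = 2 ∧
    z' ∉ ptsOf C₁ ∪ ptsOf C₂ ∧
    T = C₁ ∪ C₂ ∪ {({z₁', z', z₂'} : Finset β)} ∧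
    P = ptsOf C₁ ∪ ptsOf C₂ ∪ {z'}

/-- Nonempty subsets of `β`: the points of the projective space `P` over `GF(2)`
built on a point set `β`. -/
abbrev NESet (β : Type*) := {s : Finset β // s.Nonempty}

/-- The triples of the projective space over `GF(2)` on the nonempty subsets of `β`:
3-sets of subsets with empty symmetric difference. -/
def sdTriples (β : Type*) [Fintype β] : Finset (Finset (NESet β)) :=
  Finset.univ.filter fun t : Finset (NESet β) =>
    ∃ a b c : NESet β, a ≠ b ∧ a ≠ c ∧ b ≠ c ∧ t = {a, b, c} ∧
      symmDiff (symmDiff a.1 b.1) c.1 = ∅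

/-- The singleton `{a}` as a point of the projective space. -/
def sEl {β : Type*} (a : β) : NESet β := ⟨{a}, Finset.singleton_nonempty a⟩

/-- The pair `{a,b}` as a point of the projective space. -/
def pEl {β : Type*} (a b : β) : NESet β := ⟨{a, b}, Finset.insert_nonempty a {b}⟩

/-- The triples of `P` removed in Cameron's construction, for each triple `{a,b,c}`
of `V'`. -/
def removedTriples {β : Type*} [Fintype β] (TV' : Finset (Finset β)) :
    Finset (Finset (NESet β)) :=
  Finset.univ.filter fun t : Finset (NESet β) =>
    ∃ a b c : β, ({a, b, c} : Finset β) ∈ TV' ∧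
      (t = {pEl a b, pEl a c, pEl b c} ∨ t = {sEl a, sEl b, pEl a b} ∨
       t = {sEl a, sEl c, pEl a c} ∨ t = {sEl b, sEl c, pEl b c})

/-- The new triples of Cameron's construction, for each triple `{a,b,c}` of `V'`. -/
def addedTriples {β : Type*} [Fintype β] (TV' : Finset (Finset β)) :
    Finset (Finset (NESet β)) :=
  Finset.univ.filter fun t : Finset (NESet β) =>
    ∃ a b c : β, ({a, b, c} : Finset β) ∈ TV' ∧
      (t = {sEl a, sEl b, sEl c} ∨ t = {sEl a, pEl a b, pEl a c} ∨
       t = {sEl b, pEl a b, pEl b c} ∨ t = {sEl c, pEl a c, pEl b c})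

/-- The Steiner triple system `U` of Cameron's construction obtained from the
projective space `P` and the partial system `V'`. -/
def CameronSTS {β : Type*} [Fintype β] (TV' : Finset (Finset β)) :
    Finset (Finset (NESet β)) :=
  (sdTriples β \ removedTriples TV') ∪ addedTriples TV'

/-!
A Steiner triple system is the same as an idempotent commutative multiplication with
`x * (x * y) = y`. Given `V`, double it to a system on `none` and the pairs in `V × Bool`, replace
every point by a group `ZMod 3 × B`, and fill the groups with systems sharing a hole `X`. Over the
triple through `none` belonging to `v`, put a latin square composed of `|B| ^ 2` subsquares of order
three, the same for all `v`; each subsquare can independently be in twelve states. Over the other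
triples, put the Cayley table of the group.

Let `g` be a permutation of the points. If `g` moves some cell of the subsquare at a site, then `g`
being an automorphism forces the state at that site to avoid a value determined by the state at
another site. Many such sites make automorphisms unlikely. If there are fewer than `|B| ^ 2 / 2` of
them, then some row of sites is mostly fixed, and an automorphism `g` fixes the symbols and `X`, so
it comes from an automorphism of `V`. As `4 * u! ^ 2 ≤ 2 ^ (|B| ^ 2 / 64)`, a union bound over all
`u!` permutations leaves `u! ^ 2` choices of states all of whose automorphisms come from `V`; at
most `u!` choices are isomorphic to a given one, so `u!` of them are pairwise nonisomorphic.

Holes of order `x` are obtained by truncating a transversal design with four groups. Iterating this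
gives systems of all the residues needed to write every large admissible `u` as
`x + (2 * |V| + 1) * |ZMod 3 × B|`. A one-point system stands in for an empty `V`.
-/

open Function (Injective Surjective Semiconj₂)

/-! ### Steiner quasigroups -/

/-- A Steiner quasigroup ("squag"): the multiplication that sends two distinct points of a Steiner
triple system to the third point of their triple, and is idempotent. -/
structure IsSquag {α : Type*} (m : α → α → α) : Prop where
  idem : ∀ x, m x x = x
  comm : ∀ x y, m x y = m y x
  cancel : ∀ x y, m x (m x y) = y

namespace IsSquag

variable {α β : Type*} {m : α → α → α} {m' : β → β → β}

lemma mul_eq_iff (hm : IsSquag m) {x y z : α} : m x y = z ↔ m x z = y :=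
  ⟨fun h => by rw [← h, hm.cancel], fun h => by rw [← h, hm.cancel]⟩

lemma ne_left (hm : IsSquag m) {x y : α} (hxy : x ≠ y) : m x y ≠ x := fun h =>
  hxy (by rwa [hm.mul_eq_iff, hm.idem] at h)

lemma ne_right (hm : IsSquag m) {x y : α} (hxy : x ≠ y) : m x y ≠ y := by
  rw [hm.comm]
  exact hm.ne_left hxy.symm

lemma of_surjective (hm : IsSquag m) {f : α → β} (hf : Surjective f) (hfm : Semiconj₂ f m m') :
    IsSquag m' where
  idem := hf.forall.2 fun x => by rw [← hfm.eq, hm.idem]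
  comm := hf.forall₂.2 fun x y => by rw [← hfm.eq, ← hfm.eq, hm.comm]
  cancel := hf.forall₂.2 fun x y => by rw [← hfm.eq, ← hfm.eq, hm.cancel]

lemma conj (hm : IsSquag m) (e : α ≃ β) : IsSquag (e.arrowCongr e.conj m) :=
  hm.of_surjective e.surjective (e.semiconj₂_conj m)

end IsSquag

/-- There is a Steiner quasigroup, hence a Steiner triple system, of order `n`. -/
def HasSquag (n : ℕ) : Prop := ∃ m : Fin n → Fin n → Fin n, IsSquag m

lemma IsSquag.hasSquag {α : Type*} [Finite α] {m : α → α → α} (hm : IsSquag m) :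
    HasSquag (Nat.card α) :=
  ⟨_, hm.conj (Finite.equivFin α)⟩

lemma HasSquag.exists_isSquag {α : Type*} [Finite α] (h : HasSquag (Nat.card α)) :
    ∃ m : α → α → α, IsSquag m :=
  let ⟨_, hm⟩ := h
  ⟨_, hm.conj (Finite.equivFin α).symm⟩

lemma hasSquag_one : HasSquag 1 :=
  ⟨fun x _ => x, fun _ => rfl, fun _ _ => Subsingleton.elim _ _, fun _ _ => Subsingleton.elim _ _⟩

section Bose

variable {R : Type*} [CommRing R] [Invertible (2 : R)]

/-- Bose's multiplication on `R × ZMod 3`: its triples are the sets `{i} × ZMod 3` and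
`{(i, e), (j, e), ((i + j) / 2, e + 1)}` with `i ≠ j`. -/
def boseOp (x y : R × ZMod 3) : R × ZMod 3 :=
  if x.1 = y.1 then (x.1, -x.2 - y.2)
  else if x.2 = y.2 then (⅟2 * (x.1 + y.1), x.2 + 1)
  else if y.2 = x.2 + 1 then (2 * y.1 - x.1, x.2)
  else (2 * x.1 - y.1, y.2)

lemma boseOp_of_fst_eq (i : R) (e f : ZMod 3) : boseOp (i, e) (i, f) = (i, -e - f) :=
  if_pos rfl

variable {i j : R}

lemma boseOp_of_snd_eq (hij : i ≠ j) (e : ZMod 3) :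
    boseOp (i, e) (j, e) = (⅟2 * (i + j), e + 1) := by
  simp [boseOp, hij]

lemma boseOp_succ_right (hij : i ≠ j) (e : ZMod 3) :
    boseOp (i, e) (j, e + 1) = (2 * j - i, e) := by
  simp [boseOp, hij]

lemma boseOp_succ_left (hij : i ≠ j) (e : ZMod 3) :
    boseOp (i, e + 1) (j, e) = (2 * i - j, e) := by
  have : e ≠ e + 1 + 1 := by decide +revert
  simp [boseOp, hij, this]

lemma eq_or_eq_add_one_or_add_one_eq : ∀ e f : ZMod 3, f = e ∨ f = e + 1 ∨ e = f + 1 := by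
  decide

lemma boseOp_comm (x y : R × ZMod 3) : boseOp x y = boseOp y x := by
  obtain ⟨i, e⟩ := x
  obtain ⟨j, f⟩ := y
  rcases eq_or_ne i j with rfl | hij
  · rw [boseOp_of_fst_eq, boseOp_of_fst_eq, sub_eq_add_neg, add_comm, ← sub_eq_add_neg]
  rcases eq_or_eq_add_one_or_add_one_eq e f with rfl | rfl | rfl
  · rw [boseOp_of_snd_eq hij, boseOp_of_snd_eq hij.symm, add_comm i]
  · rw [boseOp_succ_right hij, boseOp_succ_left hij.symm]
  · rw [boseOp_succ_left hij, boseOp_succ_right hij.symm]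

lemma boseOp_cancel (x y : R × ZMod 3) : boseOp x (boseOp x y) = y := by
  obtain ⟨i, e⟩ := x
  obtain ⟨j, f⟩ := y
  rcases eq_or_ne i j with rfl | hij
  · rw [boseOp_of_fst_eq, boseOp_of_fst_eq, sub_sub_cancel]
  rcases eq_or_eq_add_one_or_add_one_eq e f with rfl | rfl | rfl
  · have hne : i ≠ ⅟2 * (i + j) := fun h => hij <| by
      linear_combination 2 * h + mul_invOf_self (2 : R) * (i + j)
    rw [boseOp_of_snd_eq hij, boseOp_succ_right hne, mul_invOf_cancel_left, add_sub_cancel_left]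
  · have hne : i ≠ 2 * j - i := fun h => hij <| by
      linear_combination ⅟2 * h + invOf_mul_self (2 : R) * (j - i)
    rw [boseOp_succ_right hij, boseOp_of_snd_eq hne, add_sub_cancel, invOf_mul_cancel_left]
  · have hne : i ≠ 2 * i - j := fun h => hij (by linear_combination -h)
    rw [boseOp_succ_left hij, boseOp_succ_left hne, sub_sub_cancel]

variable (R) in
lemma isSquag_boseOp : IsSquag (boseOp (R := R)) where
  idem x := by
    have : ∀ e : ZMod 3, -e - e = e := by decide
    rw [boseOp_of_fst_eq, this]
  comm := boseOp_comm
  cancel := boseOp_cancel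

variable (R) in
lemma hasSquag_three_mul_card [Finite R] : HasSquag (3 * Nat.card R) := by
  simpa [mul_comm] using (isSquag_boseOp R).hasSquag

end Bose

lemma isUnit_two_of_odd {n : ℕ} (hn : Odd n) : IsUnit (2 : ZMod n) :=
  mod_cast (ZMod.isUnit_iff_coprime 2 n).2 hn.coprime_two_left

lemma hasSquag_three_mul {n : ℕ} (hn : Odd n) : HasSquag (3 * n) := by
  have : NeZero n := ⟨hn.pos.ne'⟩
  let _ := (isUnit_two_of_odd hn).invertible
  simpa using hasSquag_three_mul_card (ZMod n)

/-! ### Filling the groups of a group divisible design -/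

section Fill

variable {X Γ : Type*} {K : Γ → Type*}

/-- Multiplication of points of different groups in a group divisible design with groups `K g` and
blocks of size three. The values on points of one group are irrelevant. -/
structure IsGDDOp (c : (Σ g, K g) → (Σ g, K g) → Σ g, K g) : Prop where
  comm : ∀ {p q}, p.1 ≠ q.1 → c p q = c q p
  fst_ne : ∀ {p q}, p.1 ≠ q.1 → p.1 ≠ (c p q).1
  cancel : ∀ {p q}, p.1 ≠ q.1 → c p (c p q) = q

lemma exists_isGDDOp {r : (Σ g, K g) → (Σ g, K g) → (Σ g, K g) → Prop}
    (swap : ∀ {p q s}, r p q s → r q p s) (rotate : ∀ {p q s}, r p q s → r q s p)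
    (fst_ne : ∀ {p q s}, r p q s → p.1 ≠ q.1)
    (existsUnique : ∀ {p q}, p.1 ≠ q.1 → ∃! s, r p q s) :
    ∃ c : (Σ g, K g) → (Σ g, K g) → Σ g, K g, IsGDDOp c := by
  choose! c hc huniq using fun p q => existsUnique (p := p) (q := q)
  have eq_of {p q s} (h : r p q s) : s = c p q := huniq p q (fst_ne h) s h
  exact ⟨c, fun h => eq_of (swap (hc _ _ h)),
    fun h => (fst_ne (rotate (rotate (hc _ _ h)))).symm,
    fun h => (eq_of (rotate (swap (hc _ _ h)))).symm⟩

/-- The embedding of `X ⊕ K g` as the flat over the group `g`. -/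
def liftFlat (g : Γ) : X ⊕ K g → X ⊕ Σ g, K g := Sum.map id (Sigma.mk g)

lemma liftFlat_injective (g : Γ) : Injective (liftFlat (X := X) (K := K) g) :=
  Function.injective_id.sumMap sigma_mk_injective

/-- Fill the groups of a group divisible design with systems sharing the hole `X`: points of
different groups are multiplied by `c`, and `fill g` is used on `X ⊕ K g`. -/
def fillOp (mX : X → X → X) (fill : ∀ g, X ⊕ K g → X ⊕ K g → X ⊕ K g)
    (c : (Σ g, K g) → (Σ g, K g) → Σ g, K g) : (X ⊕ Σ g, K g) → (X ⊕ Σ g, K g) → X ⊕ Σ g, K g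
  | .inl x, .inl y => .inl (mX x y)
  | .inl x, .inr ⟨g, a⟩ => liftFlat g (fill g (.inl x) (.inr a))
  | .inr ⟨g, a⟩, .inl x => liftFlat g (fill g (.inr a) (.inl x))
  | .inr ⟨g, a⟩, .inr ⟨h, b⟩ =>
    if e : g = h then liftFlat h (fill h (.inr (e ▸ a)) (.inr b)) else .inr (c ⟨g, a⟩ ⟨h, b⟩)

variable {mX : X → X → X} {fill : ∀ g, X ⊕ K g → X ⊕ K g → X ⊕ K g}
  {c : (Σ g, K g) → (Σ g, K g) → Σ g, K g}

lemma semiconj₂_liftFlat (hX : ∀ g, Semiconj₂ Sum.inl mX (fill g)) (g : Γ) :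
    Semiconj₂ (liftFlat g) (fill g) (fillOp mX fill c) := by
  rintro (x | a) (y | b)
  · rw [← (hX g).eq]
    rfl
  · rfl
  · rfl
  · simp [liftFlat, fillOp]

lemma fillOp_of_fst_ne {p q : Σ g, K g} (h : p.1 ≠ q.1) :
    fillOp mX fill c (.inr p) (.inr q) = .inr (c p q) :=
  dif_neg h

lemma flat_or_fst_ne [Nonempty Γ] (p q : X ⊕ Σ g, K g) :
    (∃ g p' q', p = liftFlat g p' ∧ q = liftFlat g q') ∨
      ∃ p' q', p = .inr p' ∧ q = .inr q' ∧ p'.1 ≠ q'.1 := by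
  rcases p with x | ⟨g, a⟩ <;> rcases q with y | ⟨h, b⟩
  · exact .inl ⟨Classical.arbitrary Γ, .inl x, .inl y, rfl, rfl⟩
  · exact .inl ⟨h, .inl x, .inr b, rfl, rfl⟩
  · exact .inl ⟨g, .inr a, .inl y, rfl, rfl⟩
  · rcases eq_or_ne g h with rfl | hgh
    · exact .inl ⟨g, .inr a, .inr b, rfl, rfl⟩
    · exact .inr ⟨_, _, rfl, rfl, hgh⟩

lemma isSquag_fillOp [Nonempty Γ] (hX : ∀ g, Semiconj₂ Sum.inl mX (fill g))
    (hfill : ∀ g, IsSquag (fill g)) (hc : IsGDDOp c) : IsSquag (fillOp mX fill c) where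
  idem p := by
    rcases flat_or_fst_ne p p with ⟨g, p', -, rfl, -⟩ | ⟨p', q', rfl, hq, hne⟩
    · rw [← (semiconj₂_liftFlat hX g).eq, (hfill g).idem]
    · exact absurd (congrArg Sigma.fst (Sum.inr_injective hq)) hne
  comm p q := by
    rcases flat_or_fst_ne p q with ⟨g, p', q', rfl, rfl⟩ | ⟨p', q', rfl, rfl, hne⟩
    · rw [← (semiconj₂_liftFlat hX g).eq, ← (semiconj₂_liftFlat hX g).eq, (hfill g).comm]
    · rw [fillOp_of_fst_ne hne, fillOp_of_fst_ne hne.symm, hc.comm hne]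
  cancel p q := by
    rcases flat_or_fst_ne p q with ⟨g, p', q', rfl, rfl⟩ | ⟨p', q', rfl, rfl, hne⟩
    · rw [← (semiconj₂_liftFlat hX g).eq, ← (semiconj₂_liftFlat hX g).eq, (hfill g).cancel]
    · rw [fillOp_of_fst_ne hne, fillOp_of_fst_ne (hc.fst_ne hne), hc.cancel hne]

end Fill

/-- There is a Steiner quasigroup of order `x + a` with a subsystem of order `x`. -/
def HasHoledSquag (x a : ℕ) : Prop :=
  ∃ (m : Fin x ⊕ Fin a → Fin x ⊕ Fin a → Fin x ⊕ Fin a) (mX : Fin x → Fin x → Fin x),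
    IsSquag m ∧ Semiconj₂ Sum.inl mX m

lemma HasHoledSquag.hasSquag {x a : ℕ} (h : HasHoledSquag x a) : HasSquag (x + a) := by
  obtain ⟨m, _, hm, _⟩ := h
  simpa using hm.hasSquag

lemma IsSquag.hasHoledSquag {α β : Type*} [Finite α] {m : α → α → α} {mβ : β → β → β}
    (hm : IsSquag m) {f : β → α} (hf : Injective f) (hfm : Semiconj₂ f mβ m) {a : ℕ}
    (ha : Nat.card β + a = Nat.card α) : HasHoledSquag (Nat.card β) a := by
  have := Finite.of_injective f hf
  have hcompl : Nat.card ↥(Set.range f)ᶜ = a := by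
    have := Set.ncard_add_ncard_compl (Set.range f)
    rw [← Nat.card_coe_set_eq, Nat.card_range_of_injective hf] at this
    rw [Nat.card_coe_set_eq]
    omega
  let eβ := Finite.equivFin β
  let e : α ≃ Fin (Nat.card β) ⊕ Fin a := (Equiv.Set.sumCompl (Set.range f)).symm.trans
    (.sumCongr ((Equiv.ofInjective f hf).symm.trans eβ) (Finite.equivFinOfCardEq hcompl))
  have he (b : β) : e (f b) = .inl (eβ b) := by
    simp [e, Equiv.Set.sumCompl_symm_apply_of_mem]
  refine ⟨_, eβ.arrowCongr eβ.conj mβ, hm.conj e, eβ.surjective.forall₂.2 fun b b' => ?_⟩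
  rw [← (eβ.semiconj₂_conj mβ).eq, ← he, ← he, ← he, hfm.eq, (e.semiconj₂_conj m).eq]

lemma hasHoledSquag_fillOp {X Γ : Type*} {K : Γ → Type*} [Finite X] [Fintype Γ]
    [DecidableEq Γ] [∀ g, Finite (K g)] {mX : X → X → X}
    {fill : ∀ g, X ⊕ K g → X ⊕ K g → X ⊕ K g}
    {c : (Σ g, K g) → (Σ g, K g) → Σ g, K g} (hX : ∀ g, Semiconj₂ Sum.inl mX (fill g))
    (hfill : ∀ g, IsSquag (fill g)) (hc : IsGDDOp c) (g : Γ) :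
    HasHoledSquag (Nat.card X + Nat.card (K g)) (∑ h ∈ {g}ᶜ, Nat.card (K h)) := by
  have : Nonempty Γ := ⟨g⟩
  have hm := isSquag_fillOp hX hfill hc
  rw [← Nat.card_sum]
  refine hm.hasHoledSquag (liftFlat_injective g) (semiconj₂_liftFlat hX g) ?_
  rw [Nat.card_sum, Nat.card_sum, Nat.card_sigma, add_assoc, Fintype.sum_eq_add_sum_compl g]

/-! ### Truncated transversal designs with doubled points -/

/-- Four vectors that are pairwise independent over every ring in which `2` is invertible. -/
def direction : Fin 4 → ℤ × ℤ := ![(1, 0), (0, 1), (1, 1), (1, -1)]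

/-- The point in which the block `β` of the transversal design with four groups `R` meets the
group `g`. -/
def tdCoord {R : Type*} [CommRing R] (β : R × R) (g : Fin 4) : R :=
  (direction g).1 * β.1 + (direction g).2 * β.2

lemma existsUnique_of_isUnit_det {R : Type*} [CommRing R] {a b c d : R}
    (hdet : IsUnit (a * d - b * c)) (i j : R) :
    ∃! β : R × R, a * β.1 + b * β.2 = i ∧ c * β.1 + d * β.2 = j := by
  obtain ⟨u, hu⟩ := hdet.exists_left_inv
  refine ⟨(u * (d * i - b * j), u * (a * j - c * i)), ⟨?_, ?_⟩, ?_⟩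
  · linear_combination i * hu
  · linear_combination j * hu
  · rintro ⟨x, y⟩ ⟨rfl, rfl⟩
    exact Prod.ext (by linear_combination -x * hu) (by linear_combination -y * hu)

lemma existsUnique_tdCoord {R : Type*} [CommRing R] (h2 : IsUnit (2 : R)) {g h : Fin 4}
    (hgh : g ≠ h) (i j : R) : ∃! β : R × R, tdCoord β g = i ∧ tdCoord β h = j := by
  refine existsUnique_of_isUnit_det ?_ i j
  have hdet : ∀ g h : Fin 4, g ≠ h →
      (direction g).1 * (direction h).2 - (direction g).2 * (direction h).1 ∈
        ({1, -1, 2, -2} : Finset ℤ) := by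
    decide
  have hdet := hdet g h hgh
  simp only [mem_insert, mem_singleton] at hdet
  have hunit : IsUnit
      (((direction g).1 * (direction h).2 - (direction g).2 * (direction h).1 : ℤ) : R) := by
    rcases hdet with h | h | h | h <;> rw [h] <;> simp [h2]
  simpa using hunit

section DoubledBlocks

/-- The nonzero vectors `± direction g` over `ZMod 3`. -/
def affinePoint (x : Fin 4 × ℤˣ) : ZMod 3 × ZMod 3 :=
  ((x.2 * (direction x.1).1 : ℤ), (x.2 * (direction x.1).2 : ℤ))

lemma affinePoint_injective : Injective affinePoint := by
  unfold Injective
  decide +kernel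

/-- The blocks of a group divisible design on `Fin 4 × ℤˣ` with groups `{g} × ℤˣ`. If `full` holds,
it has all four groups and is the affine plane of order three with the origin removed; otherwise
it is the Latin square of order two on the groups `0, 1, 2`. -/
def IsDoubledBlock (full : Prop) (x y z : Fin 4 × ℤˣ) : Prop :=
  (x.1 ≠ y.1 ∧ y.1 ≠ z.1 ∧ z.1 ≠ x.1) ∧
    (full ∧ affinePoint x + affinePoint y + affinePoint z = 0 ∨
      ¬full ∧ (x.1 ≠ 3 ∧ y.1 ≠ 3 ∧ z.1 ≠ 3) ∧ x.2 * y.2 * z.2 = 1)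

variable {full : Prop} {x y z : Fin 4 × ℤˣ}

lemma IsDoubledBlock.swap (h : IsDoubledBlock full x y z) : IsDoubledBlock full y x z := by
  unfold IsDoubledBlock at *
  rw [add_comm (affinePoint y), mul_comm y.2]
  tauto

lemma IsDoubledBlock.rotate (h : IsDoubledBlock full x y z) : IsDoubledBlock full y z x := by
  unfold IsDoubledBlock at *
  rw [add_comm (_ + _), ← add_assoc, mul_comm (_ * _), ← mul_assoc]
  tauto

lemma existsUnique_isDoubledBlock (hxy : x.1 ≠ y.1) (hfull : x.1 = 3 ∨ y.1 = 3 → full) :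
    ∃! z, IsDoubledBlock full x y z := by
  unfold IsDoubledBlock
  by_cases h : full
  · simp only [h, true_and, not_true, false_and, or_false]
    apply existsUnique_of_exists_of_unique
    · clear hfull
      revert x y
      decide +kernel
    · intro z z' hz hz'
      exact affinePoint_injective (add_left_cancel (hz.2.trans hz'.2.symm))
  · rw [imp_iff_not h, not_or] at hfull
    simp only [h, false_and, not_false_eq_true, true_and, false_or]
    unfold ExistsUnique
    revert x y
    decide +kernel

end DoubledBlocks

section Truncated

variable {R : Type*} {T : Set R}

/-- The groups of the transversal design with the last group truncated to `T` and with every point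
doubled. -/
abbrev TruncGroup (T : Set R) (g : Fin 4) : Type _ := {i : R // g = 3 → i ∈ T} × ℤˣ

lemma card_truncGroup_three : Nat.card (TruncGroup T 3) = 2 * Nat.card T := by
  rw [Nat.card_prod, Nat.card_congr (Equiv.subtypeEquivRight (q := (· ∈ T)) (by simp)), mul_comm]
  simp

lemma card_truncGroup_of_ne {g : Fin 4} (hg : g ≠ 3) :
    Nat.card (TruncGroup T g) = 2 * Nat.card R := by
  rw [Nat.card_prod, Nat.card_congr (Equiv.subtypeUnivEquiv fun i h => absurd h hg), mul_comm]
  simp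

variable [CommRing R]

/-- Each block `β` of the truncated transversal design, with its points doubled, carries a small
group divisible design. -/
def IsTruncBlock (p q s : Σ g, TruncGroup T g) : Prop :=
  ∃ β : R × R, (tdCoord β p.1 = p.2.1 ∧ tdCoord β q.1 = q.2.1 ∧ tdCoord β s.1 = s.2.1) ∧
    IsDoubledBlock (tdCoord β 3 ∈ T) (p.1, p.2.2) (q.1, q.2.2) (s.1, s.2.2)

lemma existsUnique_isTruncBlock (h2 : IsUnit (2 : R)) {p q : Σ g, TruncGroup T g}
    (hpq : p.1 ≠ q.1) : ∃! s, IsTruncBlock p q s := by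
  obtain ⟨β, ⟨hp, hq⟩, hβ⟩ := existsUnique_tdCoord h2 hpq p.2.1 q.2.1
  have mem_of_eq_three (s : Σ g, TruncGroup T g) (hs : tdCoord β s.1 = s.2.1) (h3 : s.1 = 3) :
      tdCoord β 3 ∈ T := by
    rw [← h3, hs]
    exact s.2.1.2 h3
  obtain ⟨z, hz, hz_unique⟩ := existsUnique_isDoubledBlock (full := tdCoord β 3 ∈ T)
    (x := (p.1, p.2.2)) (y := (q.1, q.2.2)) hpq
    (Or.rec (mem_of_eq_three p hp) (mem_of_eq_three q hq))
  have hz3 : z.1 = 3 → tdCoord β z.1 ∈ T := fun h3 => by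
    rw [h3]
    rcases hz.2 with h | h
    · exact h.1
    · exact absurd h3 h.2.1.2.2
  refine ⟨⟨z.1, ⟨tdCoord β z.1, hz3⟩, z.2⟩, ⟨β, ⟨hp, hq, rfl⟩, hz⟩, ?_⟩
  rintro ⟨k, i, e⟩ ⟨β', ⟨hp', hq', hs'⟩, hs⟩
  obtain rfl := hβ β' ⟨hp', hq'⟩
  obtain rfl := hz_unique _ hs
  have hi : i = ⟨tdCoord β' k, hz3⟩ := Subtype.ext hs'.symm
  rw [hi]

lemma exists_isGDDOp_truncGroup (h2 : IsUnit (2 : R)) (T : Set R) :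
    ∃ c : (Σ g, TruncGroup T g) → (Σ g, TruncGroup T g) → Σ g, TruncGroup T g, IsGDDOp c :=
  exists_isGDDOp (r := IsTruncBlock) (fun ⟨β, ⟨hp, hq, hs⟩, h⟩ => ⟨β, ⟨hq, hp, hs⟩, h.swap⟩)
    (fun ⟨β, ⟨hp, hq, hs⟩, h⟩ => ⟨β, ⟨hq, hs, hp⟩, h.rotate⟩) (fun ⟨_, _, h⟩ => h.1.1)
    (existsUnique_isTruncBlock h2)

lemma hasHoledSquag_of_isUnit_two [Finite R] (h2 : IsUnit (2 : R)) (T : Set R)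
    (hR : HasSquag (1 + 2 * Nat.card R)) (hT : HasSquag (1 + 2 * Nat.card T)) :
    HasHoledSquag (1 + 2 * Nat.card T) (6 * Nat.card R) := by
  obtain ⟨c, hc⟩ := exists_isGDDOp_truncGroup h2 T
  have exists_fill (g : Fin 4) : ∃ m : Unit ⊕ TruncGroup T g → Unit ⊕ TruncGroup T g →
      Unit ⊕ TruncGroup T g, IsSquag m := by
    apply HasSquag.exists_isSquag
    rw [Nat.card_sum, Nat.card_unique]
    rcases eq_or_ne g 3 with rfl | hg
    · rwa [card_truncGroup_three]
    · rwa [card_truncGroup_of_ne hg]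
  choose fill hfill using exists_fill
  have hX (g : Fin 4) : Semiconj₂ Sum.inl (fun _ _ => ()) (fill g) :=
    fun x y => ((hfill g).idem _).symm
  have h := hasHoledSquag_fillOp hX hfill hc 3
  have hcard : ∑ g ∈ ({3}ᶜ : Finset (Fin 4)), Nat.card (TruncGroup T g) = 6 * Nat.card R := by
    rw [sum_congr rfl fun g hg => card_truncGroup_of_ne (by simpa using hg), sum_const]
    simp [card_compl, ← mul_assoc]
  rwa [hcard, card_truncGroup_three, Nat.card_unique] at h

end Truncated

lemma HasSquag.hasHoledSquag {t n : ℕ} (ht : HasSquag (1 + 2 * t)) (hn : Odd n) (htn : t ≤ n)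
    (h : HasSquag (1 + 2 * n)) : HasHoledSquag (1 + 2 * t) (6 * n) := by
  have : NeZero n := ⟨hn.pos.ne'⟩
  obtain ⟨T, -, hT⟩ := exists_subset_card_eq (s := (univ : Finset (ZMod n))) (n := t) (by simpa)
  simpa [hT] using hasHoledSquag_of_isUnit_two (isUnit_two_of_odd hn) (T : Set (ZMod n))
    (by simpa using h) (by simpa [hT] using ht)

/-! ### Orders of Steiner quasigroups -/

lemma hasHoledSquag_six_mul {t j : ℕ} (ht : HasSquag (1 + 2 * t)) (htj : t ≤ 6 * j + 1) :
    HasHoledSquag (1 + 2 * t) (6 * (6 * j + 1)) := by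
  have h : HasSquag (3 * (4 * j + 1)) := hasSquag_three_mul ⟨2 * j, by ring⟩
  rw [show 3 * (4 * j + 1) = 1 + 2 * (6 * j + 1) by ring] at h
  exact ht.hasHoledSquag ⟨3 * j, by ring⟩ htj h

lemma exists_hasSquag_modEq_add {m t₀ : ℕ} (hm : 0 < m) (h₀ : HasSquag (1 + 2 * t₀)) (k : ℕ) :
    ∃ t, HasSquag (1 + 2 * t) ∧ t ≡ t₀ + 3 * k [MOD m] := by
  induction k with
  | zero => exact ⟨t₀, h₀, rfl⟩
  | succ k ih =>
    obtain ⟨t, ht, htk⟩ := ih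
    refine ⟨t + 3 + m * (18 * t), ?_, ?_⟩
    · convert (hasHoledSquag_six_mul (j := m * t) ht (by nlinarith)).hasSquag using 1
      ring
    · rw [Nat.ModEq, Nat.add_mul_mod_self_left]
      exact htk.add_right 3

lemma exists_hasSquag_modEq {m w : ℕ} (hm : 0 < m) (hw : w % 3 ≠ 2) :
    ∃ t, HasSquag (1 + 2 * t) ∧ t ≡ w [MOD m] := by
  obtain ⟨r, k, h₀, rfl⟩ : ∃ r k, HasSquag (1 + 2 * r) ∧ w = r + 3 * k := by
    refine ⟨w % 3, w / 3, ?_, (Nat.mod_add_div w 3).symm⟩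
    obtain h | h : w % 3 = 0 ∨ w % 3 = 1 := by omega
    · rw [h]
      exact hasSquag_one
    · rw [h]
      exact hasSquag_three_mul odd_one
  exact exists_hasSquag_modEq_add hm h₀ k

lemma exists_hasSquag_modEq_le {m : ℕ} (hm : 0 < m) :
    ∃ T, ∀ w, w % 3 ≠ 2 → ∃ t ≤ T, HasSquag (1 + 2 * t) ∧ t ≡ w [MOD 3 * m] := by
  choose! t ht using fun w hw => exists_hasSquag_modEq (m := 3 * m) (w := w) (by omega) hw
  refine ⟨(range (3 * m)).sup t, fun w hw => ?_⟩
  obtain ⟨hsq, hmod⟩ := ht (w % (3 * m)) (by rwa [Nat.mod_mul_right_mod])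
  exact ⟨_, le_sup (mem_range.2 (Nat.mod_lt w (by omega))), hsq, hmod.trans (Nat.mod_modEq _ _)⟩

lemma exists_hasHoledSquag {Q : ℕ} (hQ : 0 < Q) (c : ℕ) :
    ∃ N, ∀ u ≥ N, u % 6 = 1 ∨ u % 6 = 3 →
      ∃ x n, c ≤ n ∧ x ≤ 2 * n + 1 ∧ HasHoledSquag x (6 * n) ∧ x + Q * (6 * n) = u := by
  obtain ⟨T, hT⟩ := exists_hasSquag_modEq_le (m := 6 * Q) (by omega)
  refine ⟨1 + 2 * (T + 3 * Q + 18 * Q * (T + c)), fun u hu hu6 => ?_⟩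
  obtain ⟨w, rfl⟩ : ∃ w, u = 1 + 2 * (w + 3 * Q) := ⟨(u - 1) / 2 - 3 * Q, by omega⟩
  obtain ⟨t, htT, ht, hmod⟩ := hT w (by omega)
  obtain ⟨j, hj⟩ := (Nat.modEq_iff_dvd' (by omega)).1 hmod
  have hw : w = t + 18 * Q * j := by
    rw [show 3 * (6 * Q) = 18 * Q by ring] at hj
    omega
  have hjT : T + c ≤ j := Nat.le_of_mul_le_mul_left (c := 18 * Q) (by omega) (by omega)
  refine ⟨1 + 2 * t, 6 * j + 1, by omega, by omega, hasHoledSquag_six_mul ht (by omega), ?_⟩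
  rw [hw]
  ring

/-! ### Steiner triple systems and Steiner quasigroups -/

lemma semiconj₂_symm {α β : Type*} {m : α → α → α} {m' : β → β → β} {e : α ≃ β}
    (h : Semiconj₂ e m m') : Semiconj₂ e.symm m' m := fun x y => by
  rw [Equiv.symm_apply_eq, h.eq, e.apply_symm_apply, e.apply_symm_apply]

lemma semiconj₂_permCongr_iff {α β : Type*} {m : α → α → α} {m' : β → β → β} {e : α ≃ β}
    (he : Semiconj₂ e m m') {g : Equiv.Perm α} :
    Semiconj₂ (e.permCongr g) m' m' ↔ Semiconj₂ g m m := by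
  refine ⟨fun h => ?_, fun h => (he.comp h).comp (semiconj₂_symm he)⟩
  convert ((semiconj₂_symm he).comp h).comp he
  ext x
  simp

/-- The triples of the Steiner triple system of a Steiner quasigroup, encoded as its subsystems
of order three. -/
def triples {α : Type*} [Fintype α] (m : α → α → α) : Finset (Finset α) :=
  univ.filter fun t => t.card = 3 ∧ ∀ x ∈ t, ∀ y ∈ t, m x y ∈ t

section Triples

variable {α β : Type*} {m : α → α → α} {m' : β → β → β} {T : Finset (Finset α)}

lemma IsSquag.card_insert_mul [DecidableEq α] (hm : IsSquag m) {x y : α} (hxy : x ≠ y) :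
    ({x, y, m x y} : Finset α).card = 3 :=
  card_eq_three.2 ⟨x, y, m x y, hxy, (hm.ne_left hxy).symm, (hm.ne_right hxy).symm, rfl⟩

lemma IsSTS.ne_of_insert_mem (hT : IsSTS T) {x y z : α}
    (h : {x, y, z} ∈ T) : x ≠ y ∧ x ≠ z ∧ y ≠ z := by
  have card_pair_ne (a b : α) : ({a, b} : Finset α).card ≠ 3 :=
    (card_le_two.trans_lt (by norm_num)).ne
  have hcard := hT.1 _ h
  refine ⟨?_, ?_, ?_⟩ <;> rintro rfl <;> simp [card_pair_ne] at hcard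

lemma IsSTS.existsUnique_insert_mem (hT : IsSTS T) {x y : α}
    (hxy : x ≠ y) : ∃! z, {x, y, z} ∈ T := by
  obtain ⟨t, ⟨ht, hx, hy⟩, huniq⟩ := hT.2 x y hxy
  have hy' : y ∈ t.erase x := mem_erase.2 ⟨hxy.symm, hy⟩
  have hcard : ((t.erase x).erase y).card = 1 := by
    rw [card_erase_of_mem hy', card_erase_of_mem hx, hT.1 t ht]
  obtain ⟨z, hz⟩ := card_eq_one.1 hcard
  have htz : t = {x, y, z} := by rw [← insert_erase hx, ← insert_erase hy', hz]
  refine ⟨z, htz.subst (motive := (· ∈ T)) ht, fun w hw => ?_⟩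
  obtain ⟨-, hxw, hyw⟩ := hT.ne_of_insert_mem hw
  have hwt : w ∈ t := by
    rw [← huniq _ ⟨hw, by simp, by simp⟩]
    simp
  simpa [htz, hxw.symm, hyw.symm] using hwt

variable [Fintype α] [Fintype β]

lemma mem_triples {t : Finset α} :
    t ∈ triples m ↔ t.card = 3 ∧ ∀ x ∈ t, ∀ y ∈ t, m x y ∈ t := by
  simp only [triples, mem_filter, mem_univ, true_and]

lemma IsSquag.insert_mul_mem_triples [DecidableEq α] (hm : IsSquag m) {x y : α}
    (hxy : x ≠ y) : {x, y, m x y} ∈ triples m := by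
  have hyx : m y (m x y) = x := by rw [hm.comm x, hm.cancel]
  refine mem_triples.2 ⟨hm.card_insert_mul hxy, ?_⟩
  simp only [mem_insert, mem_singleton, forall_eq_or_imp, forall_eq]
  simp [hm.idem, hm.cancel, hm.comm y x, hm.comm (m x y), hyx]

lemma IsSquag.eq_of_mem_triples [DecidableEq α] (hm : IsSquag m) {t : Finset α}
    (ht : t ∈ triples m) {x y : α} (hx : x ∈ t) (hy : y ∈ t) (hxy : x ≠ y) : {x, y, m x y} = t := by
  obtain ⟨hcard, hmul⟩ := mem_triples.1 ht
  refine eq_of_subset_of_card_le ?_ (hcard.trans (hm.card_insert_mul hxy).symm).le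
  simp [insert_subset_iff, hx, hy, hmul x hx y hy]

lemma IsSquag.insert_mem_triples_iff [DecidableEq α] (hm : IsSquag m) {x y z : α} (hxy : x ≠ y) :
    {x, y, z} ∈ triples m ↔ m x y = z := by
  refine ⟨fun h => ?_, fun h => h ▸ hm.insert_mul_mem_triples hxy⟩
  have hmem : m x y ∈ ({x, y, z} : Finset α) := by
    rw [← hm.eq_of_mem_triples h (by simp) (by simp) hxy]
    simp
  simpa [hm.ne_left hxy, hm.ne_right hxy] using hmem

lemma IsSquag.exists_of_mem_triples [DecidableEq α] (hm : IsSquag m) {t : Finset α}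
    (ht : t ∈ triples m) : ∃ x y, x ≠ y ∧ t = {x, y, m x y} := by
  have hcard : 1 < t.card := by simp [(mem_triples.1 ht).1]
  obtain ⟨x, hx, y, hy, hxy⟩ := one_lt_card.1 hcard
  exact ⟨x, y, hxy, (hm.eq_of_mem_triples ht hx hy hxy).symm⟩

lemma IsSquag.isSTS_triples (hm : IsSquag m) : IsSTS (triples m) :=
  ⟨fun _ ht => (mem_triples.1 ht).1, fun x y hxy => ⟨{x, y, m x y},
    ⟨hm.insert_mul_mem_triples hxy, by simp, by simp⟩,
    fun _ ⟨ht, hx, hy⟩ => (hm.eq_of_mem_triples ht hx hy hxy).symm⟩⟩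

lemma IsSTS.exists_isSquag (hT : IsSTS T) :
    ∃ m : α → α → α, IsSquag m ∧ T = triples m := by
  have exists_mul (x y : α) : ∃ z, x = y ∧ z = x ∨ x ≠ y ∧ {x, y, z} ∈ T := by
    rcases eq_or_ne x y with rfl | hxy
    · exact ⟨x, .inl ⟨rfl, rfl⟩⟩
    · obtain ⟨z, hz, -⟩ := hT.existsUnique_insert_mem hxy
      exact ⟨z, .inr ⟨hxy, hz⟩⟩
  choose m hm using exists_mul
  have idem (x : α) : m x x = x := by simpa using hm x x
  have mem_of_ne {x y : α} (hxy : x ≠ y) : {x, y, m x y} ∈ T := by simpa [hxy] using hm x y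
  have eq_of_mem {x y z : α} (hz : {x, y, z} ∈ T) : m x y = z :=
    have hxy := (hT.ne_of_insert_mem hz).1
    (hT.existsUnique_insert_mem hxy).unique (mem_of_ne hxy) hz
  have hsquag : IsSquag m := by
    refine ⟨idem, fun x y => ?_, fun x y => ?_⟩ <;> rcases eq_or_ne x y with rfl | hxy
    · rfl
    · exact eq_of_mem (by simpa only [insert_comm] using mem_of_ne hxy.symm)
    · rw [idem, idem]
    · exact eq_of_mem (by simpa only [pair_comm] using mem_of_ne hxy)
  refine ⟨m, hsquag, ?_⟩
  ext t
  constructor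
  · intro ht
    obtain ⟨x, y, z, hxy, -, -, rfl⟩ := card_eq_three.1 (hT.1 t ht)
    rw [← eq_of_mem ht]
    exact hsquag.insert_mul_mem_triples hxy
  · intro ht
    obtain ⟨x, y, hxy, rfl⟩ := hsquag.exists_of_mem_triples ht
    exact mem_of_ne hxy

lemma image_mem_triples [DecidableEq β] {f : α → β} (hf : Injective f)
    (h : Semiconj₂ f m m') {t : Finset α} (ht : t ∈ triples m) : t.image f ∈ triples m' := by
  obtain ⟨hcard, hmul⟩ := mem_triples.1 ht
  refine mem_triples.2 ⟨by rw [card_image_of_injective _ hf, hcard], ?_⟩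
  simp only [forall_mem_image, ← h.eq]
  exact fun x hx y hy => mem_image_of_mem f (hmul x hx y hy)

lemma semiconj₂_iff_triples [DecidableEq β] (hm : IsSquag m) (hm' : IsSquag m') (e : α ≃ β) :
    Semiconj₂ e m m' ↔ ∀ t, t ∈ triples m ↔ t.image e ∈ triples m' := by
  constructor
  · refine fun h t => ⟨image_mem_triples e.injective h, fun ht => ?_⟩
    simpa [image_image] using image_mem_triples e.symm.injective (semiconj₂_symm h) ht
  · intro h x y
    rcases eq_or_ne x y with rfl | hxy
    · rw [hm.idem, hm'.idem]
    have ht := (h _).1 (hm.insert_mul_mem_triples hxy)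
    rw [image_insert, image_insert, image_singleton,
      hm'.insert_mem_triples_iff (e.injective.ne hxy)] at ht
    exact ht.symm

end Triples

/-- `φ` embeds the Steiner quasigroup `mV` in `mU`, and restriction along `φ` is an isomorphism
from the automorphism group of `mU` onto that of `mV`. -/
structure IsFullSub {V U : Type*} (mV : V → V → V) (mU : U → U → U) (φ : V → U) : Prop where
  injective : Injective φ
  semiconj₂ : Semiconj₂ φ mV mU
  exists_restrict : ∀ g : Equiv.Perm U, Semiconj₂ g mU mU →
    ∃ h : Equiv.Perm V, Semiconj₂ h mV mV ∧ ∀ x, g (φ x) = φ (h x)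
  existsUnique_extend : ∀ h : Equiv.Perm V, Semiconj₂ h mV mV →
    ∃! g : Equiv.Perm U, Semiconj₂ g mU mU ∧ ∀ x, g (φ x) = φ (h x)

namespace IsFullSub

variable {V U U' : Type*} {mV : V → V → V} {mU : U → U → U} {φ : V → U}

lemma fullEmbedding [Fintype V] [Fintype U] (hV : IsSquag mV) (hU : IsSquag mU)
    (h : IsFullSub mV mU φ) : FullEmbedding (triples mV) (triples mU) φ := by
  have isAut_iff (g : Equiv.Perm V) : IsAut (triples mV) g ↔ Semiconj₂ g mV mV :=
    (semiconj₂_iff_triples hV hV g).symm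
  have isAut_iff' (g : Equiv.Perm U) : IsAut (triples mU) g ↔ Semiconj₂ g mU mU :=
    (semiconj₂_iff_triples hU hU g).symm
  refine ⟨⟨h.injective, fun s => image_mem_triples h.injective h.semiconj₂, fun t ht hsub => ?_⟩,
    fun g hg => ?_, ?_⟩
  · obtain ⟨x, y, hxy, rfl⟩ := hU.exists_of_mem_triples ht
    obtain ⟨a, -, rfl⟩ := mem_image.1 (hsub (mem_insert_self _ _))
    obtain ⟨b, -, rfl⟩ := mem_image.1 (hsub (mem_insert_of_mem (mem_insert_self _ _)))
    refine ⟨{a, b, mV a b}, hV.insert_mul_mem_triples (ne_of_apply_ne φ hxy), ?_⟩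
    simp only [image_insert, image_singleton, h.semiconj₂.eq]
  · obtain ⟨k, -, hk⟩ := h.exists_restrict g ((isAut_iff' g).1 hg)
    rw [image_image, show g ∘ φ = φ ∘ k from funext hk, ← image_image,
      image_univ_of_surjective k.surjective]
  · simp only [AutRestrictIso, isAut_iff, isAut_iff']
    exact ⟨h.exists_restrict, h.existsUnique_extend⟩

lemma equiv_comp (h : IsFullSub mV mU φ) {mU' : U' → U' → U'} {e : U ≃ U'}
    (he : Semiconj₂ e mU mU') : IsFullSub mV mU' (e ∘ φ) where
  injective := e.injective.comp h.injective
  semiconj₂ := he.comp h.semiconj₂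
  exists_restrict := e.permCongr.surjective.forall.2 fun g hg => by
    obtain ⟨k, hk, hgk⟩ := h.exists_restrict g ((semiconj₂_permCongr_iff he).1 hg)
    exact ⟨k, hk, fun x => by simp [hgk]⟩
  existsUnique_extend k hk := by
    refine (e.permCongr.existsUnique_congr fun {g} => ?_).1 (h.existsUnique_extend k hk)
    simp [semiconj₂_permCongr_iff he]

/-- The automorphism group of a full one-point subsystem is trivial. -/
lemma of_isEmpty [IsEmpty V] (mV : V → V → V) {φ : Unit → U}
    (h : IsFullSub (fun _ _ => ()) mU φ) : IsFullSub mV mU isEmptyElim where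
  injective := isEmptyElim
  semiconj₂ := isEmptyElim
  exists_restrict _ _ := ⟨1, isEmptyElim, isEmptyElim⟩
  existsUnique_extend _ _ := by
    obtain ⟨g, ⟨hg, -⟩, huniq⟩ := h.existsUnique_extend 1 fun _ _ => rfl
    refine ⟨g, ⟨hg, isEmptyElim⟩, fun g' hg' => huniq g' ⟨hg'.1, fun _ => ?_⟩⟩
    exact (h.exists_restrict g' hg'.1).choose_spec.2 ()

end IsFullSub

/-! ### Counting -/

section Avoiding

variable {ι A : Type*} {M : Finset ι} {f : ι → ι} {h : ι → A → A}

/-- At the sites of `M`, exchange the value to be avoided with `a`. -/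
def swapAvoided (M : Finset ι) (f : ι → ι) (h : ι → A → A) (a : A) (s : ι → A) (i : ι) : A :=
  if i ∈ M then Equiv.swap (h i (s (f i))) a (s i) else s i

lemma swapAvoided_injective (hc : ∀ i ∈ M, f i = i → ∀ a b, h i a = h i b) {rank : ι → ℕ}
    (hrank : ∀ i ∈ M, f i ≠ i → rank (f i) < rank i) (a : A) :
    Injective (swapAvoided M f h a) := by
  intro s t hst
  funext i
  induction hk : rank i using Nat.strong_induction_on generalizing i with
  | _ k ih =>
    have hi := congrFun hst i
    by_cases hiM : i ∈ M
    · have hf : h i (s (f i)) = h i (t (f i)) := by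
        rcases eq_or_ne (f i) i with hfi | hfi
        · exact hc i hiM hfi _ _
        · rw [ih _ (hk ▸ hrank i hiM hfi) (f i) rfl]
      simpa only [swapAvoided, if_pos hiM, hf, EmbeddingLike.apply_eq_iff_eq] using hi
    · simpa only [swapAvoided, if_neg hiM] using hi

lemma exists_half_rank [Finite ι] (M : Finset ι) (f : ι → ι) : ∃ M' ⊆ M, M.card ≤ 2 * M'.card ∧
    ∃ rank : ι → ℕ, ∀ i ∈ M', f i ≠ i → rank (f i) < rank i := by
  let e := Finite.equivFin ι
  have hsplit := card_filter_add_card_filter_not (s := M) (fun i => e (f i) < e i)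
  rcases le_total M.card (2 * (M.filter fun i => e (f i) < e i).card) with hle | hle
  · exact ⟨_, filter_subset _ _, hle, fun i => e i, fun i hi _ => (mem_filter.1 hi).2⟩
  · refine ⟨M.filter fun i => ¬e (f i) < e i, filter_subset _ _, by omega,
      fun i => (e i).rev, fun i hi hne => Fin.rev_lt_rev.2 ?_⟩
    exact lt_of_le_of_ne (not_lt.1 (mem_filter.1 hi).2) (e.injective.ne hne.symm)

variable [Fintype ι] [Fintype A]

/-- The functions that avoid, at every site `i ∈ M`, a value determined by their value at the site
`f i`. -/
def avoiding (M : Finset ι) (f : ι → ι) (h : ι → A → A) : Finset (ι → A) :=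
  univ.filter fun s => ∀ i ∈ M, s i ≠ h i (s (f i))

lemma mem_avoiding {s : ι → A} : s ∈ avoiding M f h ↔ ∀ i ∈ M, s i ≠ h i (s (f i)) := by
  simp only [avoiding, mem_filter, mem_univ, true_and]

lemma card_avoiding_le_of_rank [Nonempty A] (hc : ∀ i ∈ M, f i = i → ∀ a b, h i a = h i b)
    {rank : ι → ℕ} (hrank : ∀ i ∈ M, f i ≠ i → rank (f i) < rank i) :
    (avoiding M f h).card ≤ (Fintype.card A - 1) ^ M.card * Fintype.card A ^ Mᶜ.card := by
  let a : A := Classical.arbitrary A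
  have hsub : (avoiding M f h).image (swapAvoided M f h a) ⊆
      Fintype.piFinset fun i => if i ∈ M then {a}ᶜ else univ := by
    refine image_subset_iff.2 fun s hs => Fintype.mem_piFinset.2 fun i => ?_
    by_cases hiM : i ∈ M
    · simpa [swapAvoided, hiM, Equiv.swap_apply_eq_iff] using mem_avoiding.1 hs i hiM
    · simp [hiM]
  rw [← card_image_of_injective _ (swapAvoided_injective hc hrank a)]
  refine (card_le_card hsub).trans_eq ?_
  rw [Fintype.card_piFinset, ← prod_mul_prod_compl M,
    prod_congr rfl (s₁ := M) (g := fun _ => Fintype.card A - 1),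
    prod_congr rfl (s₁ := Mᶜ) (g := fun _ => Fintype.card A), prod_const, prod_const]
  · simp +contextual
  · simp +contextual [card_compl]

/-- Since `2 * 11 ^ 8 ≤ 12 ^ 8`, avoiding one of twelve values at eight sites at least halves the
number of functions. -/
lemma card_avoiding_mul_two_pow_le (hA : Fintype.card A = 12)
    (hc : ∀ i ∈ M, f i = i → ∀ a b, h i a = h i b) {L : ℕ} (hL : 16 * L ≤ M.card) :
    (avoiding M f h).card * 2 ^ L ≤ 12 ^ Fintype.card ι := by
  have : Nonempty A := Fintype.card_pos_iff.1 (by omega)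
  obtain ⟨M', hM', hcard, rank, hrank⟩ := exists_half_rank M f
  have hmono : avoiding M f h ⊆ avoiding M' f h :=
    monotone_filter_right _ fun s _ hs i hi => hs i (hM' hi)
  have havoid := (card_le_card hmono).trans
    (card_avoiding_le_of_rank (fun i hi => hc i (hM' hi)) hrank)
  have hpow : 2 ^ L * 11 ^ M'.card ≤ 12 ^ M'.card := by
    obtain ⟨d, hd⟩ : ∃ d, M'.card = 8 * L + d := ⟨M'.card - 8 * L, by omega⟩
    calc 2 ^ L * 11 ^ M'.card = (2 * 11 ^ 8) ^ L * 11 ^ d := by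
          rw [hd, pow_add, pow_mul, mul_pow, mul_assoc]
      _ ≤ (12 ^ 8) ^ L * 12 ^ d := by gcongr <;> norm_num
      _ = 12 ^ M'.card := by rw [hd, pow_add, pow_mul]
  calc (avoiding M f h).card * 2 ^ L ≤ 11 ^ M'.card * 12 ^ M'ᶜ.card * 2 ^ L := by
        rw [hA] at havoid
        exact Nat.mul_le_mul_right _ havoid
    _ = 2 ^ L * 11 ^ M'.card * 12 ^ M'ᶜ.card := by ring
    _ ≤ 12 ^ M'.card * 12 ^ M'ᶜ.card := Nat.mul_le_mul_right _ hpow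
    _ = 12 ^ Fintype.card ι := by rw [← pow_add, card_add_card_compl]

end Avoiding

lemma eventually_mul_pow_le_two_pow (C k : ℕ) : ∀ᶠ n in Filter.atTop, C * n ^ k ≤ 2 ^ n := by
  have h := (tendsto_pow_const_div_const_pow_of_one_lt k one_lt_two).const_mul (C : ℝ)
  filter_upwards [h.eventually_le_const (u := 1) (by simp)] with n hn
  rw [← mul_div_assoc, div_le_one (by positivity)] at hn
  exact_mod_cast hn

lemma eventually_factorial_sq_le (κ : ℕ) :
    ∀ᶠ c in Filter.atTop, ∀ u ≤ κ * c, 4 * u.factorial ^ 2 ≤ 2 ^ (c ^ 2 / 64) := by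
  have hdiv : Filter.Tendsto (· / 64) Filter.atTop Filter.atTop :=
    Nat.tendsto_div_const_atTop (n := 64) (by norm_num)
  filter_upwards [Filter.eventually_ge_atTop 64,
    hdiv.eventually (eventually_mul_pow_le_two_pow (4 * (128 * κ) ^ (2 * κ)) (2 * κ))]
    with c hc hpow u hu
  set d := c / 64
  have hcd : c ≤ 128 * d := by omega
  calc 4 * u.factorial ^ 2 ≤ 4 ^ c * ((κ * c) ^ (κ * c)) ^ 2 := by
        gcongr
        · exact Nat.le_self_pow (by omega) 4
        · exact (Nat.factorial_le hu).trans (Nat.factorial_le_pow _)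
    _ = (4 * (κ * c) ^ (2 * κ)) ^ c := by
        rw [mul_pow 4, ← pow_mul, ← pow_mul]
        ring_nf
    _ ≤ (4 * (κ * (128 * d)) ^ (2 * κ)) ^ c := by gcongr
    _ = (4 * (128 * κ) ^ (2 * κ) * d ^ (2 * κ)) ^ c := by
        rw [mul_left_comm, ← mul_assoc, mul_pow (128 * κ), mul_assoc]
    _ ≤ (2 ^ d) ^ c := by gcongr
    _ = 2 ^ (d * c) := by rw [pow_mul]
    _ ≤ 2 ^ (c ^ 2 / 64) := by
        gcongr
        · norm_num
        · rw [Nat.le_div_iff_mul_le (by norm_num)]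
          nlinarith [show d * 64 ≤ c from Nat.div_mul_le_self c 64]

lemma exists_pairwise_not_rel {S : Type*} (r : Setoid S) {good : Finset S} {K w : ℕ}
    (hw : 0 < w) (hclass : ∀ s, (good.filter (r s)).card ≤ w) (hgood : K * w ≤ good.card) :
    ∃ F : Fin K → S, (∀ i, F i ∈ good) ∧ Pairwise fun i j => ¬r (F i) (F j) := by
  have hK : K ≤ (good.image (Quotient.mk r)).card := by
    have hfib : ∀ q ∈ good.image (Quotient.mk r), (good.filter (⟦·⟧ = q)).card ≤ w := by
      refine forall_mem_image.2 fun s _ => (card_le_card ?_).trans (hclass s)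
      exact monotone_filter_right _ fun t _ h => r.symm (Quotient.exact h)
    refine Nat.le_of_mul_le_mul_right (hgood.trans ?_) hw
    rw [mul_comm]
    exact card_le_mul_card_image good w hfib
  obtain ⟨f⟩ : Nonempty (Fin K ↪ good.image (Quotient.mk r)) :=
    Function.Embedding.nonempty_of_card_le (by rwa [Fintype.card_fin, Fintype.card_coe])
  choose F hF hFf using fun i => mem_image.1 (f i).2
  refine ⟨F, hF, fun i j hij h => hij (f.injective (Subtype.ext ?_))⟩
  rw [← hFf, ← hFf]
  exact Quotient.sound h

lemma card_biUnion_mul_le {S P : Type*} [Fintype S] [Fintype P] {T : Finset P}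
    {bad : P → Finset S} {D : ℕ} (h : ∀ p ∈ T, (bad p).card * D ≤ Fintype.card S) :
    (T.biUnion bad).card * D ≤ Fintype.card P * Fintype.card S :=
  calc (T.biUnion bad).card * D ≤ (∑ p ∈ T, (bad p).card) * D :=
        Nat.mul_le_mul_right _ card_biUnion_le
    _ = ∑ p ∈ T, (bad p).card * D := sum_mul _ _ _
    _ ≤ T.card * Fintype.card S := sum_le_card_nsmul _ _ _ h
    _ ≤ Fintype.card P * Fintype.card S := Nat.mul_le_mul_right _ (card_le_univ T)

section Isomorphism

variable {S U : Type*} (op : S → U → U → U)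

/-- Isomorphism of the members of a family of multiplications on `U`. -/
def isoSetoid : Setoid S where
  r s t := ∃ e : Equiv.Perm U, Semiconj₂ e (op s) (op t)
  iseqv :=
    { refl _ := ⟨1, Semiconj₂.id_left _⟩
      symm := fun ⟨e, he⟩ => ⟨e.symm, semiconj₂_symm he⟩
      trans := fun ⟨e, he⟩ ⟨e', he'⟩ => ⟨e.trans e', he'.comp he⟩ }

variable {op} [Fintype U]

lemma card_filter_isoSetoid_le (hop : Injective op) (T : Finset S) (s : S) :
    (T.filter (isoSetoid op s)).card ≤ (Fintype.card U).factorial := by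
  rw [← Fintype.card_perm, ← card_univ, ← card_image_of_injective _ hop]
  refine (card_le_card ?_).trans (card_image_le (s := univ) (f := fun e : Equiv.Perm U =>
    e.arrowCongr e.conj (op s)))
  refine image_subset_iff.2 fun t ht => mem_image.2 ?_
  obtain ⟨e, he⟩ := (mem_filter.1 ht).2
  refine ⟨e, mem_univ e, funext₂ (e.surjective.forall₂.2 fun x y => ?_)⟩
  rw [← he.eq, (e.semiconj₂_conj (op s)).eq]

lemma exists_pairwise_nonisomorphic [Fintype S] (hop : Injective op)
    {G : Set (Equiv.Perm U)} {L : ℕ} (hG : ∀ g ∉ G,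
      (univ.filter fun s => Semiconj₂ g (op s) (op s)).card * 2 ^ L ≤ Fintype.card S)
    (hL : 4 * (Fintype.card U).factorial ^ 2 ≤ 2 ^ L) (hS : 2 ^ L ≤ Fintype.card S) :
    ∃ F : Fin (Fintype.card U).factorial → S,
      (∀ i (g : Equiv.Perm U), Semiconj₂ g (op (F i)) (op (F i)) → g ∈ G) ∧
      Pairwise fun i j => ¬∃ e : Equiv.Perm U, Semiconj₂ e (op (F i)) (op (F j)) := by
  set w := (Fintype.card U).factorial with hw
  have hwpos : 0 < w := Nat.factorial_pos _
  let bad : Finset S := (univ.filter (· ∉ G)).biUnion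
    fun g => univ.filter fun s => Semiconj₂ g (op s) (op s)
  have hbad : bad.card * 2 ^ L ≤ w * Fintype.card S := by
    rw [hw, ← Fintype.card_perm]
    exact card_biUnion_mul_le fun g hg => hG g (mem_filter.1 hg).2
  have hgood : w * w ≤ badᶜ.card := by
    have hle : bad.card * (4 * w) ≤ Fintype.card S := by
      refine Nat.le_of_mul_le_mul_left (le_trans ?_ hbad) hwpos
      calc w * (bad.card * (4 * w)) = bad.card * (4 * w ^ 2) := by ring
        _ ≤ bad.card * 2 ^ L := Nat.mul_le_mul_left _ hL
    have hadd := card_add_card_compl bad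
    nlinarith
  obtain ⟨F, hF, hiso⟩ := exists_pairwise_not_rel (isoSetoid op) hwpos
    (card_filter_isoSetoid_le hop badᶜ) hgood
  refine ⟨F, fun i g hg => by_contra fun hgG => mem_compl.1 (hF i) ?_, hiso⟩
  exact mem_biUnion.2 ⟨g, by simpa using hgG, by simpa using hg⟩

end Isomorphism

/-! ### Latin squares made of independent subsquares -/

/-- The twelve latin squares of order three: `(c, α, β)` stands for the square with the cells
`IsCell (c, α, β)`. -/
abbrev SquareState := ZMod 3 × (ZMod 3)ˣ × (ZMod 3)ˣ

/-- The latin square in state `σ` has the symbol `k` in row `i` and column `j`. -/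
abbrev IsCell (σ : SquareState) (i j k : ZMod 3) : Prop := σ.2.1 * i + σ.2.2 * j + k = σ.1

lemma card_squareState : Fintype.card SquareState = 12 := by
  decide +kernel

lemma exists_isCell : ∀ i j k, ∃ σ, IsCell σ i j k := by
  decide +kernel

lemma exists_not_isCell : ∀ i j k, ∃ σ, ¬IsCell σ i j k := by
  decide +kernel

lemma exists_isCell_and_not_isCell : ∀ i j k i' j' k', ¬(i = i' ∧ j = j' ∧ k = k') →
    ∃ σ, IsCell σ i j k ∧ ¬IsCell σ i' j' k' := by
  decide +kernel

lemma eq_of_isCell_imp : ∀ σ τ, (∀ i j k, IsCell σ i j k → IsCell τ i j k) → σ = τ := by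
  decide +kernel

section Latin

variable {B : Type*} [AddCommGroup B] {s : B × B → SquareState} {a b z : ZMod 3 × B}

/-- The latin square of order `3 * |B|` whose subsquare in the rows `ZMod 3 × {I}` and the columns
`ZMod 3 × {J}` is in state `s (I, J)` has the symbol `z` in row `a` and column `b`. -/
def IsLat (s : B × B → SquareState) (a b z : ZMod 3 × B) : Prop :=
  a.2 + b.2 + z.2 = 0 ∧ IsCell (s (a.2, b.2)) a.1 b.1 z.1

/-- The symbol `z` with `IsLat s a b z`. -/
def latSym (s : B × B → SquareState) (a b : ZMod 3 × B) : ZMod 3 × B :=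
  let σ := s (a.2, b.2)
  (σ.1 - σ.2.1 * a.1 - σ.2.2 * b.1, -a.2 - b.2)

/-- The column `b` with `IsLat s a b z`. -/
def latCol (s : B × B → SquareState) (a z : ZMod 3 × B) : ZMod 3 × B :=
  let σ := s (a.2, -a.2 - z.2)
  (σ.2.2⁻¹ * (σ.1 - σ.2.1 * a.1 - z.1), -a.2 - z.2)

/-- The row `a` with `IsLat s a b z`. -/
def latRow (s : B × B → SquareState) (b z : ZMod 3 × B) : ZMod 3 × B :=
  let σ := s (-b.2 - z.2, b.2)
  (σ.2.1⁻¹ * (σ.1 - σ.2.2 * b.1 - z.1), -b.2 - z.2)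

lemma neg_sub_eq_iff {x y z : B} : -x - y = z ↔ x + y + z = 0 := by
  rw [← neg_add', neg_eq_iff_add_eq_zero]

lemma latSym_eq_iff : latSym s a b = z ↔ IsLat s a b z := by
  rw [Prod.ext_iff, and_comm]
  refine and_congr neg_sub_eq_iff ?_
  rw [IsCell, latSym, eq_comm (b := (s _).1), ← sub_eq_iff_eq_add', sub_add_eq_sub_sub]

lemma latCol_eq_iff : latCol s a z = b ↔ IsLat s a b z := by
  rw [IsLat, add_right_comm, ← neg_sub_eq_iff, Prod.ext_iff, and_comm]
  refine and_congr_right fun hJ => ?_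
  change -a.2 - z.2 = b.2 at hJ
  rw [IsCell, latCol, hJ, Units.inv_mul_eq_iff_eq_mul, sub_eq_iff_eq_add, sub_eq_iff_eq_add']
  simp only [eq_comm, add_assoc]

lemma latRow_eq_iff : latRow s b z = a ↔ IsLat s a b z := by
  rw [IsLat, add_rotate, ← neg_sub_eq_iff, Prod.ext_iff, and_comm]
  refine and_congr_right fun hI => ?_
  change -b.2 - z.2 = a.2 at hI
  rw [IsCell, latRow, hI, Units.inv_mul_eq_iff_eq_mul, sub_eq_iff_eq_add, sub_eq_iff_eq_add']
  simp only [eq_comm, add_assoc, add_left_comm]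

lemma isLat_latSym (s : B × B → SquareState) (a b : ZMod 3 × B) : IsLat s a b (latSym s a b) :=
  latSym_eq_iff.1 rfl

lemma isLat_latCol (s : B × B → SquareState) (a z : ZMod 3 × B) : IsLat s a (latCol s a z) z :=
  latCol_eq_iff.1 rfl

lemma isLat_latRow (s : B × B → SquareState) (b z : ZMod 3 × B) : IsLat s (latRow s b z) b z :=
  latRow_eq_iff.1 rfl

end Latin

/-! ### The construction -/

/-- The points outside the hole: a copy of `ZMod 3 × B` over every point of the doubled system
`Option (V × Bool)`, whose triples are the sets `{none, some (v, false), some (v, true)}` and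
`{some (v, e), some (w, f), some (v * w, xor e f)}`. -/
abbrev OuterPoint (V B : Type*) := Σ _ : Option (V × Bool), ZMod 3 × B

/-- The points of the construction. The set `X` is the hole. -/
abbrev Point (V X B : Type*) := X ⊕ OuterPoint V B

/-- The ingredients of the construction that are independent of the latin squares: the Steiner
quasigroup on `V` that is to be embedded, and one on `X ⊕ (ZMod 3 × B)` with the subsystem `X`. -/
structure Ingredients (V X B : Type*) where
  mul : V → V → V
  isSquag_mul : IsSquag mul
  holeMul : X → X → X
  fill : X ⊕ (ZMod 3 × B) → X ⊕ (ZMod 3 × B) → X ⊕ (ZMod 3 × B)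
  isSquag_fill : IsSquag fill
  semiconj₂_inl : Semiconj₂ Sum.inl holeMul fill

section Points

variable {V X B : Type*} {v w : V} {a b : ZMod 3 × B}

/-- The point `z` over `none`, a symbol of the latin squares. -/
def symPt (z : ZMod 3 × B) : Point V X B := .inr ⟨none, z⟩

/-- The point `a` over `some (v, false)`, a row of the latin square belonging to `v`. -/
def rowPt (v : V) (a : ZMod 3 × B) : Point V X B := .inr ⟨some (v, false), a⟩

/-- The point `b` over `some (v, true)`, a column of the latin square belonging to `v`. -/
def colPt (v : V) (b : ZMod 3 × B) : Point V X B := .inr ⟨some (v, true), b⟩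

lemma symPt_inj : (symPt a : Point V X B) = symPt b ↔ a = b := by
  simp [symPt]

lemma rowPt_inj : (rowPt v a : Point V X B) = rowPt w b ↔ v = w ∧ a = b := by
  simp [rowPt]

lemma colPt_inj : (colPt v a : Point V X B) = colPt w b ↔ v = w ∧ a = b := by
  simp [colPt]

lemma rowPt_ne_colPt : (rowPt v a : Point V X B) ≠ colPt w b := by
  simp [rowPt, colPt]

lemma rowPt_ne_symPt : (rowPt v a : Point V X B) ≠ symPt b := by
  simp [rowPt, symPt]

lemma colPt_ne_symPt : (colPt v a : Point V X B) ≠ symPt b := by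
  simp [colPt, symPt]

end Points

namespace Ingredients

variable {V X B : Type*} [AddCommGroup B] (D : Ingredients V X B) {s : B × B → SquareState}

/-- Multiplication of points over different points of the doubled system: by the latin square
given by `s` over the triples through `none`, and by `a + b + c = 0` over the others. -/
def crossOp (s : B × B → SquareState) : OuterPoint V B → OuterPoint V B → OuterPoint V B
  | ⟨none, z⟩, ⟨none, _⟩ => ⟨none, z⟩
  | ⟨none, z⟩, ⟨some (v, false), a⟩ => ⟨some (v, true), latCol s a z⟩
  | ⟨none, z⟩, ⟨some (v, true), b⟩ => ⟨some (v, false), latRow s b z⟩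
  | ⟨some (v, false), a⟩, ⟨none, z⟩ => ⟨some (v, true), latCol s a z⟩
  | ⟨some (v, true), b⟩, ⟨none, z⟩ => ⟨some (v, false), latRow s b z⟩
  | ⟨some (v, e), a⟩, ⟨some (w, f), b⟩ =>
    if v = w then ⟨none, bif e then latSym s b a else latSym s a b⟩
    else ⟨some (D.mul v w, xor e f), -a - b⟩

lemma isGDDOp_crossOp : IsGDDOp (D.crossOp s) where
  comm := by
    rintro ⟨_ | ⟨v, _ | _⟩, a⟩ ⟨_ | ⟨w, _ | _⟩, b⟩ h
    case none.none => exact absurd rfl h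
    all_goals try rfl
    all_goals
      rcases eq_or_ne v w with rfl | hvw
      · first | exact absurd rfl h | simp [crossOp]
      · simp [crossOp, hvw, hvw.symm, D.isSquag_mul.comm v w, sub_eq_add_neg, add_comm]
  fst_ne := by
    rintro ⟨_ | ⟨v, _ | _⟩, a⟩ ⟨_ | ⟨w, _ | _⟩, b⟩ h
    case none.none => exact absurd rfl h
    all_goals try (simp [crossOp]; done)
    all_goals
      rcases eq_or_ne v w with rfl | hvw
      · simp [crossOp]
      · simp [crossOp, hvw, (D.isSquag_mul.ne_left hvw).symm]
  cancel := by
    rintro ⟨_ | ⟨v, _ | _⟩, a⟩ ⟨_ | ⟨w, _ | _⟩, b⟩ h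
    case none.none => exact absurd rfl h
    all_goals try
      (simp [crossOp, latCol_eq_iff, latRow_eq_iff, latSym_eq_iff, isLat_latCol, isLat_latRow]
       done)
    all_goals
      rcases eq_or_ne v w with rfl | hvw
      · first
        | exact absurd rfl h
        | simp [crossOp, latCol_eq_iff, latRow_eq_iff, isLat_latSym]
      · simp [crossOp, hvw, (D.isSquag_mul.ne_left hvw).symm, D.isSquag_mul.cancel]

/-- The multiplication of the construction. -/
def op (s : B × B → SquareState) : Point V X B → Point V X B → Point V X B :=
  fillOp D.holeMul (fun _ => D.fill) (D.crossOp s)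

lemma isSquag_op : IsSquag (D.op s) :=
  isSquag_fillOp (fun _ => D.semiconj₂_inl) (fun _ => D.isSquag_fill) D.isGDDOp_crossOp

lemma op_inr_of_fst_ne {p q : OuterPoint V B} (h : p.1 ≠ q.1) :
    D.op s (.inr p) (.inr q) = .inr (D.crossOp s p q) :=
  fillOp_of_fst_ne h

lemma op_rowPt_colPt (v : V) (a b : ZMod 3 × B) :
    D.op s (rowPt v a) (colPt v b) = symPt (latSym s a b) := by
  rw [rowPt, colPt, D.op_inr_of_fst_ne (by simp)]
  simp [crossOp, symPt]

lemma op_rowPt_symPt (v : V) (a z : ZMod 3 × B) :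
    D.op s (rowPt v a) (symPt z) = colPt v (latCol s a z) :=
  D.op_inr_of_fst_ne (by simp)

lemma op_colPt_symPt (v : V) (b z : ZMod 3 × B) :
    D.op s (colPt v b) (symPt z) = rowPt v (latRow s b z) :=
  D.op_inr_of_fst_ne (by simp)

lemma op_rowPt_rowPt (v w : V) :
    D.op s (rowPt v 0) (rowPt w 0) = rowPt (D.mul v w) 0 := by
  rcases eq_or_ne v w with rfl | hvw
  · rw [D.isSquag_op.idem, D.isSquag_mul.idem]
  · rw [rowPt, rowPt, D.op_inr_of_fst_ne (by simpa using hvw)]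
    simp [crossOp, rowPt, hvw]

lemma op_eq_iff_isLat {v : V} {a b z : ZMod 3 × B} :
    D.op s (rowPt v a) (colPt v b) = symPt z ↔ IsLat s a b z := by
  rw [op_rowPt_colPt, symPt_inj, latSym_eq_iff]

lemma exists_op_symPt_eq_inl (x : X) : ∃ a b, D.op s (symPt a) (symPt b) = .inl x := by
  obtain ⟨b, hb⟩ : ∃ b, D.fill (.inr 0) (.inl x) = .inr b := by
    rcases h : D.fill (.inr 0) (.inl x) with y | b
    · rw [D.isSquag_fill.comm, D.isSquag_fill.mul_eq_iff, ← D.semiconj₂_inl.eq] at h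
      exact absurd h Sum.inl_ne_inr
    · exact ⟨b, rfl⟩
  rw [D.isSquag_fill.mul_eq_iff] at hb
  have hlift := semiconj₂_liftFlat (c := D.crossOp s) (fun _ => D.semiconj₂_inl) none
  exact ⟨0, b, (hlift (.inr 0) (.inr b)).symm.trans (congrArg _ hb)⟩

end Ingredients

/-! ### Permutations fixing a site -/

/-- The triple given by the cell `(i, j, k)` of the subsquare at the site `S` of the latin square
belonging to `v`. -/
def cellTriple {V X B : Type*} [AddCommGroup B] (v : V) (S : B × B) (i j k : ZMod 3) :
    Finset (Point V X B) :=
  {rowPt v (i, S.1), colPt v (j, S.2), symPt (k, -S.1 - S.2)}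

/-- The permutation `g` maps the triple of every cell at the site `S` to the triple of the same
cell, possibly in the latin square belonging to another point of `V`. -/
def IsFixedSite {V X B : Type*} [AddCommGroup B] (g : Equiv.Perm (Point V X B)) (S : B × B) :
    Prop :=
  ∀ v i j k, ∃ v', (cellTriple v S i j k).image g = cellTriple v' S i j k

namespace IsFixedSite

variable {V X B : Type*} [AddCommGroup B] {g : Equiv.Perm (Point V X B)} {S : B × B}

lemma apply_symPt [Nonempty V] (h : IsFixedSite g S) (k : ZMod 3) :
    g (symPt (k, -S.1 - S.2)) = symPt (k, -S.1 - S.2) := by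
  obtain ⟨v⟩ := ‹Nonempty V›
  have hmem (i j : ZMod 3) : ∃ v', g (symPt (k, -S.1 - S.2)) ∈ cellTriple v' S i j k := by
    obtain ⟨v', hv'⟩ := h v i j k
    exact ⟨v', hv' ▸ mem_image_of_mem g (by simp [cellTriple])⟩
  obtain ⟨v₀, h₀⟩ := hmem 0 0
  obtain ⟨v₁, h₁⟩ := hmem 1 1
  simp only [cellTriple, mem_insert, mem_singleton] at h₀ h₁
  rcases h₀ with h₀ | h₀ | h₀
  · simp [h₀, rowPt_inj, rowPt_ne_colPt, rowPt_ne_symPt] at h₁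
  · simp [h₀, colPt_inj, rowPt_ne_colPt.symm, colPt_ne_symPt] at h₁
  · exact h₀

lemma apply_rowPt_colPt (h : IsFixedSite g S) (v : V) (i j : ZMod 3) : ∃ v',
    g (rowPt v (i, S.1)) = rowPt v' (i, S.1) ∧ g (colPt v (j, S.2)) = colPt v' (j, S.2) := by
  have hmem (i j k : ZMod 3) : ∃ v', g (rowPt v (i, S.1)) ∈ cellTriple v' S i j k ∧
      g (colPt v (j, S.2)) ∈ cellTriple v' S i j k := by
    obtain ⟨v', hv'⟩ := h v i j k
    exact ⟨v', hv' ▸ mem_image_of_mem g (by simp [cellTriple]),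
      hv' ▸ mem_image_of_mem g (by simp [cellTriple])⟩
  obtain ⟨v', hrow, hcol⟩ := hmem i j 0
  obtain ⟨v₁, hrow₁, -⟩ := hmem i (j + 1) 1
  obtain ⟨v₂, -, hcol₂⟩ := hmem (i + 1) j 1
  simp only [cellTriple, mem_insert, mem_singleton] at hrow hcol hrow₁ hcol₂
  refine ⟨v', ?_, ?_⟩
  · rcases hrow with hrow | hrow | hrow
    · exact hrow
    · simp [hrow, colPt_inj, rowPt_ne_colPt.symm, colPt_ne_symPt] at hrow₁
    · simp [hrow, symPt_inj, rowPt_ne_symPt.symm, colPt_ne_symPt.symm] at hrow₁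
  · rcases hcol with hcol | hcol | hcol
    · simp [hcol, rowPt_inj, rowPt_ne_colPt, rowPt_ne_symPt] at hcol₂
    · exact hcol
    · simp [hcol, symPt_inj, rowPt_ne_symPt.symm, colPt_ne_symPt.symm] at hcol₂

end IsFixedSite

lemma exists_forall_ne_of_iff {A : Type*} {C E : A → Prop} {p : Prop} (hC : ∃ a, C a)
    (hC' : ∃ a, ¬C a) (hp : p → ∃ a, ¬(C a ↔ E a)) :
    ∃ f : A → A, (p → ∀ a b, f a = f b) ∧ ∀ a b, (p → a = b) → (C a ↔ E b) → a ≠ f b := by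
  by_cases h : p
  · obtain ⟨c, hc⟩ := hp h
    refine ⟨fun _ => c, fun _ _ _ => rfl, fun a b hab hCE => ?_⟩
    rintro rfl
    exact hc (hab h ▸ hCE)
  · obtain ⟨c, hc⟩ := hC
    obtain ⟨c', hc'⟩ := hC'
    refine ⟨fun b => if E b then c' else c, fun h' => absurd h' h, fun a b _ hCE => ?_⟩
    rintro rfl
    by_cases hb : E b
    · simp [hb, hc'] at hCE
    · simp [hb, hc] at hCE

namespace Ingredients

variable {V X B : Type*} [AddCommGroup B] (D : Ingredients V X B)

lemma exists_eq_cellTriple_of_isLat {s : B × B → SquareState} {a b z : ZMod 3 × B}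
    (h : IsLat s a b z) {v : V} {t : Finset (Point V X B)}
    (ht : t = {rowPt v a, colPt v b, symPt z}) : ∃ v S i j k, t = cellTriple v S i j k := by
  have hz : -a.2 - b.2 = z.2 := neg_sub_eq_iff.2 h.1
  exact ⟨v, (a.2, b.2), a.1, b.1, z.1, by rw [ht, cellTriple, hz]⟩

lemma op_congr_or_exists_eq_cellTriple (P Q : Point V X B) :
    (∀ s s', D.op s P Q = D.op s' P Q) ∨
      ∀ s, ∃ v S i j k, {P, Q, D.op s P Q} = cellTriple v S i j k := by
  rcases P with x | ⟨d, a⟩ <;> rcases Q with y | ⟨d', b⟩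
  iterate 3 exact .inl fun _ _ => rfl
  rcases eq_or_ne d d' with rfl | hd
  · exact .inl fun _ _ => by simp [op, fillOp]
  have row_col (s v a b) : ∃ v' S i j k,
      {rowPt v a, colPt v b, D.op s (rowPt v a) (colPt v b)} = cellTriple v' S i j k :=
    exists_eq_cellTriple_of_isLat (isLat_latSym s a b) (by rw [op_rowPt_colPt])
  have row_sym (s v a z) : ∃ v' S i j k,
      {rowPt v a, symPt z, D.op s (rowPt v a) (symPt z)} = cellTriple v' S i j k :=
    exists_eq_cellTriple_of_isLat (isLat_latCol s a z) (by rw [op_rowPt_symPt, pair_comm])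
  have col_sym (s v b z) : ∃ v' S i j k,
      {colPt v b, symPt z, D.op s (colPt v b) (symPt z)} = cellTriple v' S i j k :=
    exists_eq_cellTriple_of_isLat (isLat_latRow s b z)
      (by rw [op_colPt_symPt, pair_comm, insert_comm])
  have swap (s : B × B → SquareState) (P Q) :
      ({P, Q, D.op s P Q} : Finset (Point V X B)) = {Q, P, D.op s Q P} := by
    rw [D.isSquag_op.comm, insert_comm]
  rcases d with _ | ⟨v, e⟩ <;> rcases d' with _ | ⟨w, f⟩
  · exact absurd rfl hd
  · cases f
    · exact .inr fun s => swap s _ _ ▸ row_sym s w b a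
    · exact .inr fun s => swap s _ _ ▸ col_sym s w b a
  · cases e
    · exact .inr fun s => row_sym s v a b
    · exact .inr fun s => col_sym s v a b
  rcases eq_or_ne v w with rfl | hvw
  · cases e <;> cases f
    · exact absurd rfl hd
    · exact .inr fun s => row_col s v a b
    · exact .inr fun s => swap s _ _ ▸ row_col s v b a
    · exact absurd rfl hd
  · refine .inl fun _ _ => ?_
    rw [D.op_inr_of_fst_ne hd, D.op_inr_of_fst_ne hd]
    simp [crossOp, hvw]

section Triples

variable [Fintype V] [Fintype X] [Fintype B]

lemma cellTriple_mem_triples {s : B × B → SquareState} {v : V} {S : B × B} {i j k : ZMod 3} :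
    cellTriple v S i j k ∈ triples (D.op s) ↔ IsCell (s S) i j k := by
  rw [cellTriple, D.isSquag_op.insert_mem_triples_iff rowPt_ne_colPt, op_eq_iff_isLat, IsLat]
  exact and_iff_right (neg_sub_eq_iff.1 rfl)

lemma mem_triples_congr_or_eq_cellTriple (t : Finset (Point V X B)) :
    (∀ s s', t ∈ triples (D.op s) ↔ t ∈ triples (D.op s')) ∨
      ∃ v S i j k, t = cellTriple v S i j k := by
  by_cases ht : ∃ s, t ∈ triples (D.op s)
  · obtain ⟨s₀, hs₀⟩ := ht
    obtain ⟨P, Q, hPQ, rfl⟩ := D.isSquag_op.exists_of_mem_triples hs₀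
    rcases D.op_congr_or_exists_eq_cellTriple P Q with h | h
    · refine .inl fun s s' => ?_
      rw [D.isSquag_op.insert_mem_triples_iff hPQ, D.isSquag_op.insert_mem_triples_iff hPQ, h s s']
    · exact .inr (h s₀)
  · exact .inl fun s s' => iff_of_false (fun h => ht ⟨s, h⟩) fun h => ht ⟨s', h⟩

end Triples

-- The triple of a cell at `S` that is moved by `g` is present exactly when its image is, and
-- whether the image is present depends on at most one site, through a different cell if it is `S`.
lemma exists_forall_ne_of_not_isFixedSite [Finite V] [Finite X] [Finite B]
    {g : Equiv.Perm (Point V X B)} {S : B × B} (hS : ¬IsFixedSite g S) :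
    ∃ (S' : B × B) (f : SquareState → SquareState),
      (S' = S → ∀ a b, f a = f b) ∧ ∀ s, Semiconj₂ g (D.op s) (D.op s) → s S ≠ f (s S') := by
  have := Fintype.ofFinite V
  have := Fintype.ofFinite X
  have := Fintype.ofFinite B
  simp only [IsFixedSite, not_forall, not_exists] at hS
  obtain ⟨v, i, j, k, hS⟩ := hS
  have isCell_iff (s) (hs : Semiconj₂ g (D.op s) (D.op s)) :
      IsCell (s S) i j k ↔ (cellTriple v S i j k).image g ∈ triples (D.op s) := by
    rw [← D.cellTriple_mem_triples (v := v)]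
    exact (semiconj₂_iff_triples D.isSquag_op D.isSquag_op g).1 hs _
  rcases D.mem_triples_congr_or_eq_cellTriple ((cellTriple v S i j k).image g) with
    hconst | ⟨v', S', i', j', k', himage⟩
  · obtain ⟨f, hf, hne⟩ := exists_forall_ne_of_iff (p := S = S) (exists_isCell i j k)
      (exists_not_isCell i j k)
      (E := fun _ => (cellTriple v S i j k).image g ∈ triples (D.op fun _ => 1)) fun _ => by
        by_cases h : (cellTriple v S i j k).image g ∈ triples (D.op fun _ => 1)
        · simp [h, exists_not_isCell i j k]
        · simp [h, exists_isCell i j k]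
    exact ⟨S, f, hf, fun s hs => hne _ _ (fun _ => rfl) ((isCell_iff s hs).trans (hconst _ _))⟩
  · obtain ⟨f, hf, hne⟩ := exists_forall_ne_of_iff (p := S' = S) (exists_isCell i j k)
      (exists_not_isCell i j k) (E := fun σ => IsCell σ i' j' k') fun hSS => by
        obtain ⟨σ, hσ, hσ'⟩ := exists_isCell_and_not_isCell i j k i' j' k' (by
          rintro ⟨rfl, rfl, rfl⟩
          exact hS v' (hSS ▸ himage))
        exact ⟨σ, fun h => hσ' (h.1 hσ)⟩
    refine ⟨S', f, hf, fun s hs => hne _ _ (fun h => h ▸ rfl) ?_⟩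
    rw [isCell_iff s hs, himage, D.cellTriple_mem_triples]

end Ingredients

/-! ### Automorphisms of the construction -/

/-- The permutation of the points of the construction induced by a permutation of `V`. -/
def liftPerm {V X B : Type*} (h : Equiv.Perm V) : Equiv.Perm (Point V X B) :=
  Equiv.sumCongr (Equiv.refl X)
    (Equiv.sigmaCongrLeft (β := fun _ => ZMod 3 × B) (h.prodCongr (Equiv.refl Bool)).optionCongr)

lemma exists_and_add {B : Type*} [AddCommGroup B] [Fintype B] {q : B → Prop}
    (hq : 2 * (univ.filter fun J => ¬q J).card < Fintype.card B) (I : B) :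
    ∃ J, q J ∧ q (I + J) := by
  by_contra! h
  have card_translate :
      (univ.filter fun J => ¬q (I + J)).card = (univ.filter fun J => ¬q J).card :=
    card_equiv (Equiv.addLeft I) (by simp)
  have hcover : (univ : Finset B) ⊆
      (univ.filter fun J => ¬q J) ∪ univ.filter fun J => ¬q (I + J) := fun J _ => by
    simpa [imp_iff_not_or] using h J
  have hle := (card_le_card hcover).trans (card_union_le _ _)
  rw [card_univ, card_translate] at hle
  omega

lemma exists_two_mul_card_filter_lt {B : Type*} [Fintype B] {q : B × B → Prop}
    (hq : 2 * (univ.filter fun S => ¬q S).card < Fintype.card B ^ 2) :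
    ∃ I, 2 * (univ.filter fun J => ¬q (I, J)).card < Fintype.card B := by
  have hsum : ∑ I : B, 2 * (univ.filter fun J => ¬q (I, J)).card < ∑ _ : B, Fintype.card B := by
    rw [← mul_sum, sum_const, card_univ, smul_eq_mul, ← sq]
    simpa only [card_filter, Fintype.sum_prod_type] using hq
  obtain ⟨I, -, hI⟩ := exists_lt_of_sum_lt hsum
  exact ⟨I, hI⟩

namespace Ingredients

variable {V X B : Type*} [AddCommGroup B] (D : Ingredients V X B) {s : B × B → SquareState}

lemma semiconj₂_liftPerm {h : Equiv.Perm V} (hh : Semiconj₂ h D.mul D.mul) :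
    Semiconj₂ (liftPerm h) (D.op s) (D.op s) := by
  let hdouble := (h.prodCongr (Equiv.refl Bool)).optionCongr
  have liftPerm_liftFlat (d : Option (V × Bool)) (p : X ⊕ (ZMod 3 × B)) :
      liftPerm h (liftFlat (K := fun _ => ZMod 3 × B) d p) =
        liftFlat (K := fun _ => ZMod 3 × B) (hdouble d) p := by
    rcases p with x | a <;> rfl
  have hflat := semiconj₂_liftFlat (c := D.crossOp s) (fun _ => D.semiconj₂_inl)
  intro P Q
  rcases flat_or_fst_ne P Q with ⟨d, p, q, rfl, rfl⟩ | ⟨⟨d, a⟩, ⟨d', b⟩, rfl, rfl, hne⟩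
  · rw [liftPerm_liftFlat, liftPerm_liftFlat, op, ← (hflat d).eq, ← (hflat _).eq,
      liftPerm_liftFlat]
  · have liftPerm_inr (p : OuterPoint V B) :
        liftPerm h (.inr p : Point V X B) = .inr ⟨hdouble p.1, p.2⟩ := rfl
    simp only [D.op_inr_of_fst_ne hne, liftPerm_inr]
    rw [D.op_inr_of_fst_ne (hdouble.injective.ne hne)]
    rcases d with _ | ⟨v, _ | _⟩ <;> rcases d' with _ | ⟨w, _ | _⟩
    case none.none => exact absurd rfl hne
    all_goals try rfl
    all_goals
      rcases eq_or_ne v w with rfl | hvw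
      · simp [crossOp, hdouble]
      · simp [crossOp, hdouble, hvw, hh.eq]

lemma isFullSub_rowPt
    (hs : ∀ g : Equiv.Perm (Point V X B), Semiconj₂ g (D.op s) (D.op s) →
      ∃ h : Equiv.Perm V, Semiconj₂ h D.mul D.mul ∧ g = liftPerm h) :
    IsFullSub D.mul (D.op s) fun v => rowPt v 0 where
  injective v w h := (rowPt_inj.1 h).1
  semiconj₂ v w := (D.op_rowPt_rowPt v w).symm
  exists_restrict g hg := by
    obtain ⟨h, hh, rfl⟩ := hs g hg
    exact ⟨h, hh, fun _ => rfl⟩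
  existsUnique_extend h hh := by
    refine ⟨liftPerm h, ⟨D.semiconj₂_liftPerm hh, fun _ => rfl⟩, ?_⟩
    rintro g ⟨hg, hgv⟩
    obtain ⟨h', -, rfl⟩ := hs g hg
    exact congrArg liftPerm (Equiv.ext fun v => (rowPt_inj.1 (hgv v)).1)

lemma op_injective [Nonempty V] : Injective D.op := by
  intro s s' h
  obtain ⟨v⟩ := ‹Nonempty V›
  refine funext fun S => eq_of_isCell_imp _ _ fun i j k hcell => ?_
  have hz : S.1 + S.2 + (-S.1 - S.2) = 0 := neg_sub_eq_iff.1 rfl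
  have hlat : IsLat s (i, S.1) (j, S.2) (k, -S.1 - S.2) := ⟨hz, hcell⟩
  rw [← D.op_eq_iff_isLat (v := v), h, D.op_eq_iff_isLat] at hlat
  exact hlat.2

lemma card_filter_semiconj₂_mul_two_pow_le [Finite V] [Finite X] [Fintype B]
    {g : Equiv.Perm (Point V X B)} {L : ℕ}
    (hL : 16 * L ≤ (univ.filter fun S : B × B => ¬IsFixedSite g S).card) :
    (univ.filter fun s => Semiconj₂ g (D.op s) (D.op s)).card * 2 ^ L ≤
      Fintype.card (B × B → SquareState) := by
  choose! S' f hconst hne using fun S => D.exists_forall_ne_of_not_isFixedSite (g := g) (S := S)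
  rw [Fintype.card_fun, card_squareState]
  refine le_trans (Nat.mul_le_mul_right _ (card_le_card fun s hs => mem_avoiding.2 fun S hS => ?_))
    (card_avoiding_mul_two_pow_le card_squareState
      (fun S hS => hconst S (mem_filter.1 hS).2) hL)
  exact hne S (mem_filter.1 hS).2 s (mem_filter.1 hs).2

section Automorphism

variable {D} {g : Equiv.Perm (Point V X B)} (hg : Semiconj₂ g (D.op s) (D.op s)) {γ : V → V}
include hg

lemma exists_forall_apply_rowPt_eq [Nonempty V] [Fintype B]
    (hfix : 2 * (univ.filter fun S => ¬IsFixedSite g S).card < Fintype.card B ^ 2) :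
    ∃ γ : V → V, ∀ v, (∀ a, g (rowPt v a) = rowPt (γ v) a) ∧
      ∃ b, g (colPt v b) = colPt (γ v) b := by
  obtain ⟨I, hI⟩ := exists_two_mul_card_filter_lt hfix
  obtain ⟨J₀, hJ₀, -⟩ := exists_and_add hI 0
  choose γ hrow hcol using fun v => hJ₀.apply_rowPt_colPt v 0 0
  have col_of_isFixedSite {J} (hJ : IsFixedSite g (I, J)) (v) :
      g (colPt v (0, J)) = colPt (γ v) (0, J) := by
    obtain ⟨v', hrow', hcol'⟩ := hJ.apply_rowPt_colPt v 0 0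
    obtain rfl := (rowPt_inj.1 (hrow'.symm.trans (hrow v))).1
    exact hcol'
  refine ⟨γ, fun v => ⟨fun a => ?_, (0, J₀), hcol v⟩⟩
  obtain ⟨J, hJ, hJ'⟩ := exists_and_add hI (a.2 - I)
  let z := latSym s a (0, J)
  have hz : g (symPt z) = symPt z := by
    have h := hJ'.apply_symPt z.1
    have hsnd : -I - (a.2 - I + J) = -a.2 - J := by abel
    rwa [hsnd] at h
  have hlat (v) : D.op s (colPt v (0, J)) (symPt z) = rowPt v a := by
    rw [op_colPt_symPt, latRow_eq_iff.2 (isLat_latSym s a (0, J))]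
  rw [← hlat v, hg.eq, col_of_isFixedSite hJ, hz, hlat]

lemma apply_symPt_of_apply_rowPt {v : V} (hrow : ∀ a, g (rowPt v a) = rowPt (γ v) a)
    {b : ZMod 3 × B} (hcol : g (colPt v b) = colPt (γ v) b) (z : ZMod 3 × B) :
    g (symPt z) = symPt z := by
  have hlat (v) : D.op s (rowPt v (latRow s b z)) (colPt v b) = symPt z :=
    D.op_eq_iff_isLat.2 (isLat_latRow s b z)
  rw [← hlat v, hg.eq, hrow, hcol, hlat, hlat]

lemma apply_colPt_of_apply_rowPt {v : V} (hrow : ∀ a, g (rowPt v a) = rowPt (γ v) a)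
    (hsym : ∀ z, g (symPt z) = symPt z) (b : ZMod 3 × B) : g (colPt v b) = colPt (γ v) b := by
  have hlat (v) : D.op s (rowPt v 0) (symPt (latSym s 0 b)) = colPt v b := by
    rw [op_rowPt_symPt, latCol_eq_iff.2 (isLat_latSym s 0 b)]
  rw [← hlat v, hg.eq, hrow, hsym, hlat]

lemma apply_inl_of_apply_symPt (hsym : ∀ z, g (symPt z) = symPt z) (x : X) :
    g (.inl x) = .inl x := by
  obtain ⟨a, b, hab⟩ := D.exists_op_symPt_eq_inl (s := s) x
  rw [← hab, hg.eq, hsym, hsym]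

lemma exists_eq_liftPerm [Nonempty V] [Finite V] [Fintype B]
    (hfix : 2 * (univ.filter fun S => ¬IsFixedSite g S).card < Fintype.card B ^ 2) :
    ∃ h : Equiv.Perm V, Semiconj₂ h D.mul D.mul ∧ g = liftPerm h := by
  obtain ⟨γ, hγ⟩ := exists_forall_apply_rowPt_eq hg hfix
  have hrow v a : g (rowPt v a) = rowPt (γ v) a := (hγ v).1 a
  have hsym : ∀ z, g (symPt z) = symPt z := by
    obtain ⟨v⟩ := ‹Nonempty V›
    obtain ⟨b, hcol⟩ := (hγ v).2
    exact apply_symPt_of_apply_rowPt hg (hrow v) hcol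
  have hcol v b : g (colPt v b) = colPt (γ v) b := apply_colPt_of_apply_rowPt hg (hrow v) hsym b
  have hinj : Injective γ := fun v w hvw =>
    (rowPt_inj.1 (g.injective ((hrow v 0).trans (hvw ▸ (hrow w 0).symm)))).1
  refine ⟨Equiv.ofBijective γ (Finite.injective_iff_bijective.1 hinj), fun v w => ?_, ?_⟩
  · have hmul : (rowPt (γ (D.mul v w)) 0 : Point V X B) = rowPt (D.mul (γ v) (γ w)) 0 := by
      rw [← hrow, ← D.op_rowPt_rowPt (s := s), hg.eq, hrow, hrow, op_rowPt_rowPt]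
    exact (rowPt_inj.1 hmul).1
  · refine Equiv.ext fun P => ?_
    rcases P with x | ⟨_ | ⟨v, _ | _⟩, a⟩
    · exact apply_inl_of_apply_symPt hg hsym x
    · exact hsym a
    · exact hrow v a
    · exact hcol v a

end Automorphism

end Ingredients

/-! ### Large families -/

/-- There are `u!` pairwise nonisomorphic Steiner quasigroups of order `u`, each containing a full
copy of `mV`. -/
def HasFullFamily {V : Type*} (mV : V → V → V) (u : ℕ) : Prop :=
  ∃ op : Fin u.factorial → Fin u → Fin u → Fin u,
    (∀ i, IsSquag (op i) ∧ ∃ φ, IsFullSub mV (op i) φ) ∧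
    Pairwise fun i j => ¬∃ e : Equiv.Perm (Fin u), Semiconj₂ e (op i) (op j)

lemma Ingredients.hasFullFamily {V X B : Type*} [Nonempty V] [Fintype V] [Fintype X] [Fintype B]
    [AddCommGroup B] (D : Ingredients V X B) {u : ℕ} (hu : Fintype.card (Point V X B) = u)
    (hL : 4 * u.factorial ^ 2 ≤ 2 ^ (Fintype.card B ^ 2 / 64)) : HasFullFamily D.mul u := by
  have hG : ∀ g ∉ {g | ∃ h : Equiv.Perm V, Semiconj₂ h D.mul D.mul ∧ g = liftPerm h},
      (univ.filter fun s => Semiconj₂ g (D.op s) (D.op s)).card * 2 ^ (Fintype.card B ^ 2 / 64) ≤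
        Fintype.card (B × B → SquareState) := fun g hg => by
    rcases (univ.filter fun s => Semiconj₂ g (D.op s) (D.op s)).eq_empty_or_nonempty with
      hempty | ⟨s, hs⟩
    · simp [hempty]
    · refine D.card_filter_semiconj₂_mul_two_pow_le ?_
      by_contra! hlt
      exact hg (exists_eq_liftPerm (mem_filter.1 hs).2 (by omega))
  have hS : 2 ^ (Fintype.card B ^ 2 / 64) ≤ Fintype.card (B × B → SquareState) := by
    rw [Fintype.card_fun, card_squareState, Fintype.card_prod, ← sq]
    exact (Nat.pow_le_pow_left (by norm_num) _).trans
      (Nat.pow_le_pow_right (by norm_num) (Nat.div_le_self _ _))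
  subst hu
  obtain ⟨F, hF, hiso⟩ := exists_pairwise_nonisomorphic D.op_injective hG hL hS
  let e := Fintype.equivFin (Point V X B)
  have he i := e.semiconj₂_conj (D.op (F i))
  refine ⟨fun i => e.arrowCongr e.conj (D.op (F i)), fun i => ⟨D.isSquag_op.conj e, _,
    (D.isFullSub_rowPt (hF i)).equiv_comp (he i)⟩, fun i j hij => ?_⟩
  rintro ⟨k, hk⟩
  exact hiso hij ⟨(e.trans k).trans e.symm, (semiconj₂_symm (he j)).comp (hk.comp (he i))⟩

lemma hasFullFamily_of_hasHoledSquag {V : Type*} [Nonempty V] [Fintype V] {mV : V → V → V}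
    (hV : IsSquag mV) {x n u : ℕ} (hn : 0 < n) (hx : HasHoledSquag x (6 * n))
    (hu : x + (2 * Fintype.card V + 1) * (6 * n) = u)
    (hL : 4 * u.factorial ^ 2 ≤ 2 ^ ((2 * n) ^ 2 / 64)) : HasFullFamily mV u := by
  have : NeZero (2 * n) := ⟨by omega⟩
  obtain ⟨m, mX, hm, hmX⟩ := hx
  have hB : Fintype.card (ZMod 3 × ZMod (2 * n)) = 6 * n := by
    rw [Fintype.card_prod, ZMod.card, ZMod.card]
    ring
  let e : Fin x ⊕ Fin (6 * n) ≃ Fin x ⊕ (ZMod 3 × ZMod (2 * n)) :=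
    Equiv.sumCongr (Equiv.refl _) (Fintype.equivFinOfCardEq hB).symm
  let D : Ingredients V (Fin x) (ZMod (2 * n)) :=
    { mul := mV
      isSquag_mul := hV
      holeMul := mX
      fill := e.arrowCongr e.conj m
      isSquag_fill := hm.conj e
      semiconj₂_inl := (e.semiconj₂_conj m).comp hmX }
  refine D.hasFullFamily ?_ (by rwa [ZMod.card])
  simp only [← hu, Fintype.card_sum, Fintype.card_fin, Fintype.card_sigma, hB, sum_const, card_univ,
    Fintype.card_option, Fintype.card_prod, Fintype.card_bool, smul_eq_mul, mul_comm 2]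

lemma exists_hasFullFamily_of_nonempty {V : Type*} [Nonempty V] [Finite V] {mV : V → V → V}
    (hV : IsSquag mV) : ∃ N, ∀ u ≥ N, u % 6 = 1 ∨ u % 6 = 3 → HasFullFamily mV u := by
  have := Fintype.ofFinite V
  set Q := 2 * Fintype.card V + 1
  obtain ⟨c, hc⟩ := Filter.eventually_atTop.1 (eventually_factorial_sq_le (3 * Q + 2))
  obtain ⟨N, hN⟩ := exists_hasHoledSquag (Q := Q) (by omega) (c + 1)
  refine ⟨N, fun u hu hu6 => ?_⟩
  obtain ⟨x, n, hcn, hxn, hx, hxu⟩ := hN u hu hu6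
  have hun : u ≤ (3 * Q + 2) * (2 * n) := by nlinarith
  exact hasFullFamily_of_hasHoledSquag hV (by omega) hx hxu (hc _ (by omega) u hun)

lemma exists_hasFullFamily {V : Type*} [Finite V] {mV : V → V → V} (hV : IsSquag mV) :
    ∃ N, ∀ u ≥ N, u % 6 = 1 ∨ u % 6 = 3 → HasFullFamily mV u := by
  cases isEmpty_or_nonempty V
  · have hunit : IsSquag fun _ _ : Unit => () :=
      ⟨fun _ => rfl, fun _ _ => rfl, fun _ _ => rfl⟩
    obtain ⟨N, hN⟩ := exists_hasFullFamily_of_nonempty hunit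
    refine ⟨N, fun u hu hu6 => ?_⟩
    obtain ⟨op, hop, hiso⟩ := hN u hu hu6
    exact ⟨op, fun i => ⟨(hop i).1, _, (hop i).2.choose_spec.of_isEmpty mV⟩, hiso⟩
  · exact exists_hasFullFamily_of_nonempty hV

theorem stmt18_general {α : Type*} [Fintype α] (TV : Finset (Finset α)) (hV : IsSTS TV) :
    ∃ N : ℕ, ∀ u : ℕ, N ≤ u → u % 6 = 1 ∨ u % 6 = 3 →
      ∃ F : Fin u.factorial → Finset (Finset (Fin u)),
        (∀ i, IsSTS (F i) ∧ ∃ φ : α → Fin u, FullEmbedding TV (F i) φ) ∧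
        ∀ i j, i ≠ j →
          ¬∃ e : Equiv.Perm (Fin u), ∀ t : Finset (Fin u), t ∈ F i ↔ t.image e ∈ F j := by
  obtain ⟨mV, hmV, rfl⟩ := hV.exists_isSquag
  obtain ⟨N, hN⟩ := exists_hasFullFamily hmV
  refine ⟨N, fun u hu hu6 => ?_⟩
  obtain ⟨op, hop, hiso⟩ := hN u hu hu6
  refine ⟨fun i => triples (op i), fun i => ⟨(hop i).1.isSTS_triples, ?_⟩, ?_⟩
  · obtain ⟨φ, hφ⟩ := (hop i).2
    exact ⟨φ, hφ.fullEmbedding hmV (hop i).1⟩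
  · rintro i j hij ⟨e, he⟩
    exact hiso hij ⟨e, (semiconj₂_iff_triples (hop i).1 (hop j).1 e).2 he⟩

/-- **Remark 3.14.** If `V_*` is a Steiner triple system, then there is an integer
`N` such that, for `u ≥ N` and `u ≡ 1` or `3 (mod 6)`, there are at least
`⌊u / (2^145·|V_*|^25)⌋!` pairwise nonisomorphic Steiner triple systems on `u`
points, each having a subsystem isomorphic to `V_*` that is `Aut`-invariant, on
which the automorphism group induces `Aut V_*`, with `Aut U ≅ Aut V_*`. -/
theorem stmt18 {α : Type*} [Fintype α] (TV : Finset (Finset α)) (hV : IsSTS TV) :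
    ∃ N : ℕ, ∀ u : ℕ, N ≤ u → u % 6 = 1 ∨ u % 6 = 3 →
      ∃ F : Fin (Nat.factorial (u / (2 ^ 145 * Fintype.card α ^ 25))) →
          Finset (Finset (Fin u)),
        (∀ i, IsSTS (F i) ∧ ∃ φ : α → Fin u, FullEmbedding TV (F i) φ) ∧
        ∀ i j, i ≠ j →
          ¬∃ e : Equiv.Perm (Fin u), ∀ t : Finset (Fin u), t ∈ F i ↔ t.image e ∈ F j := by
  obtain ⟨N, hN⟩ := stmt18_general TV hV
  refine ⟨N, fun u hu hu6 => ?_⟩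
  obtain ⟨F, hF, hiso⟩ := hN u hu hu6
  let ι := Fin.castLE (Nat.factorial_le (Nat.div_le_self u (2 ^ 145 * Fintype.card α ^ 25)))
  exact ⟨F ∘ ι, fun i => hF (ι i), fun i j hij => hiso _ _ ((Fin.castLE_injective _).ne hij)⟩

end
end

section
/- For every integer n ≥ 1: any two partial Steiner triple systems satisfying the defining conditions of Q(z) (for this n) are isomorphic, and every such PSTS has trivial automorphism group. -/
open Finset

noncomputable section
open scoped Classical

/-!
The triples of a cyclic system can be numbered by `ZMod k` so that exactly the consecutive ones
meet; no point lies on three of them when the number of points is even, so the `i`-th triple is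
`{v i, w i, v (i + 1)}`, where `v i` is its common point with its predecessor and `w i` is private.
The cycle may be started at any `v i` and run through in either direction, so we may take `z = v 0`
and `z'_1 = v 1` (or `z'_2 = v 1`). Labelling both cycles in this way identifies any two systems
`Q(z)` with the same combinatorial model, and hence with each other.

Such a labelling of a given system is moreover unique. Indeed `z` is the only point on four triples,
`z'_1` and `z'_2` are the only points on three, and the triple `{v i, w i, v (i + 1)}` together with
`v i` determines `v (i + 1)`, and with it the next triple of the cycle. A second labelling therefore
agrees with the first, or with the first after an exchange of the two cycles; the latter is
impossible since the cycles have `n + 2` and `n + 3` triples. Composing a labelling with an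
automorphism gives a labelling again, so the automorphism is trivial.
-/

section PartialTripleSystems

variable {α : Type*} {C S T : Finset (Finset α)} {s t : Finset α} {a b c p q : α}

theorem mem_ptsOf : p ∈ ptsOf C ↔ ∃ t ∈ C, p ∈ t := by
  simp only [ptsOf, mem_sup, id]

theorem exists_eq_triple_of_mem (hs : #s = 3) (ha : a ∈ s) (hb : b ∈ s) (hab : a ≠ b) :
    ∃ c, s = {a, c, b} := by
  obtain ⟨c, hc⟩ := card_eq_one.mp (by grind : #(s \ {a, b}) = 1)
  refine ⟨c, ?_⟩
  ext x
  have := Finset.ext_iff.mp hc x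
  grind

namespace IsPSTS

theorem mono (hT : IsPSTS T) (h : S ⊆ T) : IsPSTS S :=
  ⟨fun t ht ↦ hT.1 t (h ht), fun p q hpq s hs t ht ↦ hT.2 p q hpq s (h hs) t (h ht)⟩

theorem eq_of_mem_inter (hT : IsPSTS T) (hs : s ∈ T) (ht : t ∈ T) (hst : s ≠ t)
    (hp : p ∈ s ∩ t) (hq : q ∈ s ∩ t) : p = q := by
  simp only [mem_inter] at hp hq
  by_contra hpq
  exact hst (hT.2 p q hpq s hs t ht hp.1 hq.1 hp.2 hq.2)

theorem card_ptsOf_of_forall_mem (hC : IsPSTS C) (hne : C.Nonempty) (hp : ∀ t ∈ C, p ∈ t) :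
    #(ptsOf C) = 2 * #C + 1 := by
  have hpts : ptsOf C = insert p (C.biUnion (·.erase p)) := by
    obtain ⟨t, ht⟩ := hne
    ext q
    by_cases hq : q = p <;> grind [mem_ptsOf]
  have hdisj : (C : Set (Finset α)).PairwiseDisjoint (·.erase p) := by
    intro s hs t ht hst
    refine disjoint_left.mpr fun q hqs hqt ↦ (mem_erase.mp hqs).1 ?_
    exact hC.eq_of_mem_inter hs ht hst (by grind) (by grind)
  have hcard : ∀ t ∈ C, #(t.erase p) = 2 := fun t ht ↦ by
    rw [card_erase_of_mem (hp t ht), hC.1 t ht]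
  rw [hpts, card_insert_of_notMem (by simp), card_biUnion hdisj, sum_congr rfl hcard, sum_const,
    smul_eq_mul, mul_comm]

end IsPSTS

namespace IsCyclicPSTS

/- If `p` lay on three triples, these would be each other's only neighbours, so by connectedness
every triple would pass through `p`, and `ptsOf C` would have an odd number of elements. -/
theorem card_filter_mem_le_two (hC : IsCyclicPSTS C) (hpsts : IsPSTS C)
    (heven : Even #(ptsOf C)) (p : α) : #(C.filter (p ∈ ·)) ≤ 2 := by
  by_contra! hcard
  set S := C.filter (p ∈ ·)
  have hnbhd : ∀ t ∈ S, S.erase t = C.filter fun s ↦ s ≠ t ∧ (s ∩ t).Nonempty := by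
    intro t ht
    refine eq_of_subset_of_card_le (fun s hs ↦ ?_) ?_
    · have hps : p ∈ s ∩ t := by grind
      exact mem_filter.mpr ⟨by grind, by grind, p, hps⟩
    · rw [hC.2.1 t (mem_filter.mp ht).1, card_erase_of_mem ht]
      lia
  have hstep : ∀ t ∈ S, ∀ s, TriAdj C t s → s ∈ S := by
    rintro t ht s ⟨-, hs, hts, hne⟩
    have : s ∈ S.erase t := by
      rw [hnbhd t ht]
      exact mem_filter.mpr ⟨hs, hts.symm, inter_comm t s ▸ hne⟩
    exact mem_of_mem_erase this
  obtain ⟨t, ht⟩ : S.Nonempty := card_pos.mp (by lia)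
  have hall : ∀ s ∈ C, p ∈ s := by
    intro s hs
    suffices s ∈ S from (mem_filter.mp this).2
    induction hC.2.2 t (mem_filter.mp ht).1 s hs with
    | refl => exact ht
    | tail _ h ih => exact hstep _ (ih h.1) _ h
  have hodd := hpsts.card_ptsOf_of_forall_mem ⟨t, (mem_filter.mp ht).1⟩ hall
  grind

end IsCyclicPSTS

end PartialTripleSystems

section CycleGraphs

variable {k : ℕ}

theorem zmod_natCast_ne_zero {m : ℕ} (hm : m ≠ 0) (hmk : m < k) : (m : ZMod k) ≠ 0 := by
  rw [Ne, ZMod.natCast_eq_zero_iff]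
  exact Nat.not_dvd_of_pos_of_lt hm.pos hmk

theorem zmod_two_ne_zero (hk : 2 < k) : (2 : ZMod k) ≠ 0 :=
  mod_cast zmod_natCast_ne_zero two_ne_zero hk

theorem exists_zmod_bijective_of_connected {V : Type*} [Finite V] {G : SimpleGraph V}
    (hconn : G.Connected) (hdeg : ∀ v, (G.neighborSet v).ncard = 2) :
    ∃ k, 3 ≤ k ∧ ∃ c : ZMod k → V, Function.Bijective c ∧
      ∀ i j, G.Adj (c i) (c j) ↔ j = i + 1 ∨ j = i - 1 := by
  obtain ⟨v⟩ := hconn.nonempty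
  have hne : (G.neighborSet v).Nonempty := Set.nonempty_of_ncard_ne_zero (by simp [hdeg])
  have hcycles : G.IsCycles := fun v _ ↦ hdeg v
  obtain ⟨p, hp, hverts⟩ := hcycles.exists_cycle_toSubgraph_verts_eq_connectedComponentSupp
    (c := G.connectedComponentMk v) rfl hne
  have hk := hp.three_le_length
  have : NeZero p.length := ⟨by lia⟩
  let c : ZMod p.length → V := fun i ↦ p.getVert i.val
  have hinj : Function.Injective c := fun i j hij ↦
    ZMod.val_injective _ <| hp.getVert_injOn' (by simp; have := i.val_lt; lia)
      (by simp; have := j.val_lt; lia) hij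
  have hcast : ∀ m : ℕ, m ≤ p.length → c m = p.getVert m := by
    intro m hm
    obtain rfl | hm := hm.eq_or_lt
    · simp [c]
    · simp [c, ZMod.val_cast_of_lt hm]
  have hadj : ∀ i, G.Adj (c i) (c (i + 1)) := by
    intro i
    have := p.adj_getVert_succ i.val_lt
    rwa [← hcast _ i.val_lt.le, ← hcast _ i.val_lt, Nat.cast_succ, ZMod.natCast_zmod_val] at this
  have hnbhd : ∀ i, {c (i + 1), c (i - 1)} = G.neighborSet (c i) := by
    intro i
    refine Set.eq_of_subset_of_ncard_le ?_ ?_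
    · simpa [Set.pair_subset_iff, hadj i] using (hadj (i - 1)).symm
    · rw [hdeg, Set.ncard_pair]
      intro h
      apply zmod_two_ne_zero hk
      linear_combination hinj h
  refine ⟨p.length, hk, c, ⟨hinj, fun w ↦ ?_⟩, fun i j ↦ ?_⟩
  · have hw : w ∈ p.toSubgraph.verts := by
      rw [hverts]
      exact SimpleGraph.ConnectedComponent.sound (hconn w v)
    obtain ⟨m, rfl, hm⟩ := p.mem_support_iff_exists_getVert.mp (p.mem_verts_toSubgraph.mp hw)
    exact ⟨m, hcast m hm⟩
  · rw [← SimpleGraph.mem_neighborSet, ← hnbhd]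
    simp [hinj.eq_iff]

end CycleGraphs

section CycleLabellings

variable {α : Type*} {C : Finset (Finset α)} {k : ℕ} {v w : ZMod k → α}

/-- The intersection graph of a family of triples: two distinct triples are adjacent when they
share a point. -/
def tripleGraph (C : Finset (Finset α)) : SimpleGraph C where
  Adj s t := t ≠ s ∧ (t.1 ∩ s.1).Nonempty
  symm := ⟨fun s t h ↦ ⟨h.1.symm, inter_comm t.1 s.1 ▸ h.2⟩⟩
  loopless := ⟨fun _ h ↦ h.1 rfl⟩

namespace IsCyclicPSTS

theorem connected_tripleGraph (hC : IsCyclicPSTS C) : (tripleGraph C).Connected := by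
  refine SimpleGraph.connected_iff_exists_forall_reachable _ |>.mpr ?_
  obtain ⟨t, ht⟩ : C.Nonempty := card_pos.mp (by have := hC.1; lia)
  refine ⟨⟨t, ht⟩, fun ⟨s, hs⟩ ↦ ?_⟩
  induction hC.2.2 t ht s hs with
  | refl => rfl
  | tail _ h ih =>
    exact (ih h.1).trans <| SimpleGraph.Adj.reachable <| SimpleGraph.Adj.symm
      ⟨fun he ↦ h.2.2.1 (congrArg Subtype.val he), h.2.2.2⟩

theorem ncard_neighborSet_tripleGraph (hC : IsCyclicPSTS C) (t : C) :
    ((tripleGraph C).neighborSet t).ncard = 2 := by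
  rw [← hC.2.1 t.1 t.2, ← Set.ncard_coe_finset,
    ← Set.ncard_image_of_injective _ Subtype.val_injective]
  congr 1
  ext s
  rw [mem_coe, mem_filter]
  refine ⟨?_, fun ⟨hs, hst, hne⟩ ↦ ⟨⟨s, hs⟩, ⟨fun h ↦ hst (congrArg Subtype.val h), hne⟩, rfl⟩⟩
  rintro ⟨s, ⟨hst, hne⟩, rfl⟩
  exact ⟨s.2, Subtype.val_injective.ne hst, hne⟩

theorem exists_zmod_triples (hC : IsCyclicPSTS C) :
    ∃ k, 3 ≤ k ∧ ∃ t : ZMod k → Finset α, Function.Injective t ∧ Set.range t = C ∧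
      ∀ i j, i ≠ j → ((t j ∩ t i).Nonempty ↔ j = i + 1 ∨ j = i - 1) := by
  obtain ⟨k, hk, c, hc, hadj⟩ := exists_zmod_bijective_of_connected hC.connected_tripleGraph
    hC.ncard_neighborSet_tripleGraph
  refine ⟨k, hk, fun i ↦ (c i).1, Subtype.val_injective.comp hc.injective, ?_, fun i j hij ↦ ?_⟩
  · change Set.range (Subtype.val ∘ c) = _
    rw [hc.surjective.range_comp, Subtype.range_val]
  · exact ⟨fun h ↦ (hadj i j).mp ⟨hc.injective.ne hij.symm, h⟩, fun h ↦ ((hadj i j).mpr h).2⟩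

theorem exists_zmod_triples_points (hC : IsCyclicPSTS C) (hpsts : IsPSTS C)
    (heven : Even #(ptsOf C)) :
    ∃ k, 3 ≤ k ∧ ∃ (t : ZMod k → Finset α) (v : ZMod k → α),
      Function.Injective t ∧ Set.range t = C ∧ Function.Injective v ∧
      (∀ i j, v i ∈ t j ↔ j = i ∨ j = i - 1) ∧
      ∀ i j, i ≠ j → (t j ∩ t i).Nonempty → j = i + 1 ∨ j = i - 1 := by
  obtain ⟨k, hk, t, ht, hrange, hinter⟩ := hC.exists_zmod_triples
  have : Fact (1 < k) := ⟨by lia⟩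
  have hpred := fun i : ZMod k ↦ (pred_ne_self i).symm
  have htC : ∀ i, t i ∈ C := fun i ↦ hrange.subset ⟨i, rfl⟩
  have hcommon : ∀ i, ∃ x, x ∈ t i ∧ x ∈ t (i - 1) := fun i ↦ by
    obtain ⟨x, hx⟩ := (hinter i (i - 1) (hpred i)).mpr (.inr rfl)
    exact ⟨x, (mem_inter.mp hx).symm⟩
  choose v hv hv' using hcommon
  have hv_mem : ∀ i j, v i ∈ t j → j = i ∨ j = i - 1 := by
    intro i j hij
    by_contra! hne
    exact (hC.card_filter_mem_le_two hpsts heven (v i)).not_gt (two_lt_card.mpr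
      ⟨t i, by grind, t (i - 1), by grind, t j, by grind, ht.ne (hpred i), ht.ne hne.1.symm,
        ht.ne hne.2.symm⟩)
  refine ⟨k, hk, t, v, ht, hrange, fun i j hij ↦ ?_, fun i j ↦ ⟨hv_mem i j, ?_⟩,
    fun i j hij ↦ (hinter i j hij).mp⟩
  · have hi := hv_mem j i (hij ▸ hv i)
    have hi' := hv_mem j (i - 1) (hij ▸ hv' i)
    by_contra hne
    exact zmod_two_ne_zero hk (by grind)
  · rintro (rfl | rfl)
    exacts [hv _, hv' _]

end IsCyclicPSTS

/-- A labelling of the points of a cyclic triple system by two copies of `ZMod k`: the triples are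
`{v i, w i, v (i + 1)}`, so that `v` enumerates the points common to two consecutive triples, and
`w` those lying on a single triple. -/
structure IsCycleLabelling (C : Finset (Finset α)) (v w : ZMod k → α) : Prop where
  three_le : 3 ≤ k
  v_injective : Function.Injective v
  w_injective : Function.Injective w
  v_ne_w : ∀ i j, v i ≠ w j
  mem_iff : ∀ t, t ∈ C ↔ ∃ i, t = {v i, w i, v (i + 1)}

theorem IsCyclicPSTS.exists_isCycleLabelling (hC : IsCyclicPSTS C) (hpsts : IsPSTS C)
    (heven : Even #(ptsOf C)) :
    ∃ (k : ℕ) (v w : ZMod k → α), IsCycleLabelling C v w := by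
  obtain ⟨k, hk, t, v, ht, hrange, hv_inj, hv_mem, hinter⟩ :=
    hC.exists_zmod_triples_points hpsts heven
  have : Fact (1 < k) := ⟨by lia⟩
  have htC : ∀ i, t i ∈ C := fun i ↦ hrange.subset ⟨i, rfl⟩
  have hv : ∀ i, v i ∈ t i := fun i ↦ (hv_mem i i).mpr (.inl rfl)
  have hv_succ : ∀ i, v (i + 1) ∈ t i := fun i ↦ (hv_mem _ _).mpr (.inr (by ring))
  have hthird : ∀ i, ∃ x, t i = {v i, x, v (i + 1)} := fun i ↦
    exists_eq_triple_of_mem (hpsts.1 _ (htC i)) (hv i) (hv_succ i) (hv_inj.ne (succ_ne_self i).symm)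
  choose w hw using hthird
  have hw_ne : ∀ i, w i ≠ v i ∧ w i ≠ v (i + 1) := fun i ↦ by
    have := hpsts.1 _ (htC i)
    rw [hw, card_triple_eq_three_iff] at this
    grind
  have hw_mem : ∀ i j, w i ∈ t j → j = i := by
    intro i j hij
    by_contra! hne
    have hwi : w i ∈ t j ∩ t i := by grind
    obtain rfl | rfl := hinter i j hne.symm ⟨_, hwi⟩
    · exact (hw_ne i).2 (hpsts.eq_of_mem_inter (htC _) (htC _) (ht.ne hne) hwi (by grind))
    · exact (hw_ne i).1 (hpsts.eq_of_mem_inter (htC _) (htC _) (ht.ne hne) hwi (by grind))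
  refine ⟨k, v, w, hk, hv_inj, fun i j hij ↦ hw_mem j i (hij ▸ by grind), fun i j hij ↦ ?_,
    fun s ↦ ?_⟩
  · obtain rfl := hw_mem j i (hij ▸ hv i)
    exact (hw_ne i).1 hij.symm
  · simp_rw [← hw, eq_comm (a := s)]
    exact (Set.ext_iff.mp hrange s).symm

namespace IsCycleLabelling

theorem translate (h : IsCycleLabelling C v w) (m : ZMod k) :
    IsCycleLabelling C (fun i ↦ v (m + i)) (fun i ↦ w (m + i)) where
  three_le := h.three_le
  v_injective := h.v_injective.comp (add_right_injective m)
  w_injective := h.w_injective.comp (add_right_injective m)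
  v_ne_w _ _ := h.v_ne_w _ _
  mem_iff t := by
    rw [h.mem_iff, (Equiv.addLeft m).surjective.exists]
    simp only [Equiv.coe_addLeft, add_assoc]

theorem reflect (h : IsCycleLabelling C v w) :
    IsCycleLabelling C (fun i ↦ v (-i)) (fun i ↦ w (-i - 1)) where
  three_le := h.three_le
  v_injective := h.v_injective.comp neg_injective
  w_injective := h.w_injective.comp ((sub_left_injective).comp neg_injective)
  v_ne_w _ _ := h.v_ne_w _ _
  mem_iff t := by
    rw [h.mem_iff, (Equiv.subLeft (-1 : ZMod k)).surjective.exists]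
    refine exists_congr fun i ↦ ?_
    rw [Equiv.subLeft_apply, show -1 - i + 1 = -i by ring, show -1 - i = -i - 1 by ring,
      show -(i + 1) = -i - 1 by ring]
    grind

theorem coe_ptsOf (h : IsCycleLabelling C v w) :
    (ptsOf C : Set α) = Set.range v ∪ Set.range w := by
  ext p
  simp only [mem_coe, mem_ptsOf, h.mem_iff, Set.mem_union, Set.mem_range]
  grind

theorem card_ptsOf (h : IsCycleLabelling C v w) : #(ptsOf C) = 2 * k := by
  have : NeZero k := ⟨by have := h.three_le; lia⟩
  rw [← Set.ncard_coe_finset, h.coe_ptsOf, Set.ncard_union_eq (Set.disjoint_range_iff.mpr h.v_ne_w),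
    Set.ncard_range_of_injective h.v_injective, Set.ncard_range_of_injective h.w_injective,
    Nat.card_zmod, two_mul]

theorem card_filter_w_mem (h : IsCycleLabelling C v w) (i : ZMod k) :
    #(C.filter (w i ∈ ·)) = 1 := by
  refine card_eq_one.mpr ⟨{v i, w i, v (i + 1)}, ?_⟩
  ext t
  simp only [mem_filter, h.mem_iff, mem_singleton]
  grind [h.v_ne_w, h.w_injective]

theorem exists_zero_one (h : IsCycleLabelling C v w) {z a b : α} (hmem : {z, a, b} ∈ C)
    (hza : z ≠ a) (hz : #(C.filter (z ∈ ·)) = 2) (ha : #(C.filter (a ∈ ·)) = 2) :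
    ∃ v' w' : ZMod k → α, IsCycleLabelling C v' w' ∧ v' 0 = z ∧ v' 1 = a := by
  have hne_w : ∀ {p}, #(C.filter (p ∈ ·)) = 2 → ∀ i, p ≠ w i := by
    rintro p hp i rfl
    simp [h.card_filter_w_mem] at hp
  obtain ⟨i, hi⟩ := (h.mem_iff _).mp hmem
  have hz_mem : z ∈ ({v i, w i, v (i + 1)} : Finset α) := by simp [← hi]
  have ha_mem : a ∈ ({v i, w i, v (i + 1)} : Finset α) := by simp [← hi]
  have hcases : z = v i ∧ a = v (i + 1) ∨ z = v (i + 1) ∧ a = v i := by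
    have := hne_w hz i
    have := hne_w ha i
    grind
  obtain ⟨rfl, rfl⟩ | ⟨rfl, rfl⟩ := hcases
  · exact ⟨_, _, h.translate i, by simp, rfl⟩
  · exact ⟨_, _, (h.translate (i + 1)).reflect, by simp, by simp⟩

end IsCycleLabelling

end CycleLabellings

section QLabellings

variable {k l k' l' : ℕ} {α β : Type*}

/-- Names for the points of a system `Q(z)` whose cyclic parts have `k` and `l` triples: `v₁`, `w₁`
and `v₂`, `w₂` are to label the two parts as in `IsCycleLabelling`, with `z` labelled by both `v₁ 0`
and `v₂ 0`, and `z'_1`, `z'_2`, `z'` by `v₁ 1`, `v₂ 1` and `apex`. -/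
inductive QPoint (k l : ℕ)
  | v₁ (i : ZMod k)
  | w₁ (i : ZMod k)
  | v₂ (i : ZMod l)
  | w₂ (i : ZMod l)
  | apex

/-- Names for the triples of a system `Q(z)`: those of its two cyclic parts, and the additional
triple `{z'_1, z', z'_2}`. -/
inductive QTriple (k l : ℕ)
  | cycle₁ (i : ZMod k)
  | cycle₂ (i : ZMod l)
  | bridge

namespace QPoint

/-- The map on names identifying the two names of `z`. -/
def glue : QPoint k l → QPoint k l
  | v₂ i => if i = 0 then v₁ 0 else v₂ i
  | a => a

/-- The exchange of the two cyclic parts. -/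
def swap : QPoint k l → QPoint l k
  | v₁ i => v₂ i
  | w₁ i => w₂ i
  | v₂ i => v₁ i
  | w₂ i => w₁ i
  | apex => apex

/-- The map out of `QPoint k l` given by two cycle labellings and the image `p` of `apex`. -/
def elim (v₁ w₁ : ZMod k → α) (v₂ w₂ : ZMod l → α) (p : α) : QPoint k l → α
  | .v₁ i => v₁ i
  | .w₁ i => w₁ i
  | .v₂ i => v₂ i
  | .w₂ i => w₂ i
  | .apex => p

/-- The names of the triples through a point. -/
def triples : QPoint k l → Finset (QTriple k l)
  | v₁ i =>
    if i = 0 then {.cycle₁ 0, .cycle₁ (-1), .cycle₂ 0, .cycle₂ (-1)}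
    else if i = 1 then {.cycle₁ 1, .cycle₁ 0, .bridge}
    else {.cycle₁ i, .cycle₁ (i - 1)}
  | w₁ i => {.cycle₁ i}
  | v₂ i =>
    if i = 0 then {.cycle₁ 0, .cycle₁ (-1), .cycle₂ 0, .cycle₂ (-1)}
    else if i = 1 then {.cycle₂ 1, .cycle₂ 0, .bridge}
    else {.cycle₂ i, .cycle₂ (i - 1)}
  | w₂ i => {.cycle₂ i}
  | apex => {.bridge}

/-- The number of triples through a point. -/
def degree : QPoint k l → ℕ
  | v₁ i => if i = 0 then 4 else if i = 1 then 3 else 2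
  | v₂ i => if i = 0 then 4 else if i = 1 then 3 else 2
  | _ => 1

theorem card_triples [Nontrivial (ZMod k)] [Nontrivial (ZMod l)] (a : QPoint k l) :
    #a.triples = a.degree := by
  cases a with
  | v₁ i | v₂ i =>
    simp only [triples, degree]
    split_ifs <;> simp [*, eq_comm (a := (0 : ZMod _)), (pred_ne_self i).symm]
  | _ => rfl

theorem degree_pos (a : QPoint k l) : 0 < a.degree := by
  cases a <;> simp only [degree] <;> grind

theorem eq_v₁_or_eq_v₂_of_degree_eq_four {a : QPoint k l} (ha : a.degree = 4) :
    a = v₁ 0 ∨ a = v₂ 0 := by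
  cases a <;> grind [degree]

theorem eq_v₁_or_eq_v₂_of_degree_eq_three {a : QPoint k l} (ha : a.degree = 3) :
    a = v₁ 1 ∨ a = v₂ 1 := by
  cases a <;> grind [degree]

end QPoint

/-- The names of the points on a triple. -/
def QTriple.points : QTriple k l → Finset (QPoint k l)
  | cycle₁ i => {.v₁ i, .w₁ i, .v₁ (i + 1)}
  | cycle₂ i => {.v₂ i, .w₂ i, .v₂ (i + 1)}
  | bridge => {.v₁ 1, .apex, .v₂ 1}

/-- `f` names the points of the partial system `T` in such a way that `T` becomes a system `Q(z)`
with cyclic parts of `k` and `l` triples. -/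
structure IsQLabelling (T : Finset (Finset α)) (f : QPoint k l → α) : Prop where
  three_le_left : 3 ≤ k
  three_le_right : 3 ≤ l
  isPSTS : IsPSTS T
  eq_iff : ∀ a b, f a = f b ↔ a.glue = b.glue
  mem_iff : ∀ t, t ∈ T ↔ ∃ s : QTriple k l, t = s.points.image f

theorem IsCycleLabelling.isQLabelling {C₁ C₂ T : Finset (Finset α)} {v₁ w₁ : ZMod k → α}
    {v₂ w₂ : ZMod l → α} {z' : α} (h₁ : IsCycleLabelling C₁ v₁ w₁)
    (h₂ : IsCycleLabelling C₂ v₂ w₂) (hz : v₁ 0 = v₂ 0)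
    (hinter : ptsOf C₁ ∩ ptsOf C₂ = {v₁ 0}) (hz' : z' ∉ ptsOf C₁ ∪ ptsOf C₂) (hT : IsPSTS T)
    (hT_eq : T = C₁ ∪ C₂ ∪ {{v₁ 1, z', v₂ 1}}) :
    IsQLabelling T (QPoint.elim v₁ w₁ v₂ w₂ z') where
  three_le_left := h₁.three_le
  three_le_right := h₂.three_le
  isPSTS := hT
  eq_iff := by
    have hv₁ (i) : v₁ i ∈ ptsOf C₁ := by simp [← mem_coe, h₁.coe_ptsOf]
    have hw₁ (i) : w₁ i ∈ ptsOf C₁ := by simp [← mem_coe, h₁.coe_ptsOf]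
    have hv₂ (i) : v₂ i ∈ ptsOf C₂ := by simp [← mem_coe, h₂.coe_ptsOf]
    have hw₂ (i) : w₂ i ∈ ptsOf C₂ := by simp [← mem_coe, h₂.coe_ptsOf]
    have hcommon {p} (hp₁ : p ∈ ptsOf C₁) (hp₂ : p ∈ ptsOf C₂) : p = v₁ 0 := by
      rw [← mem_singleton, ← hinter]
      exact mem_inter.mpr ⟨hp₁, hp₂⟩
    have := h₁.v_injective
    have := h₁.w_injective
    have := h₂.v_injective
    have := h₂.w_injective
    have := h₁.v_ne_w
    have := h₂.v_ne_w
    rintro (i | i | i | i | _) (j | j | j | j | _) <;>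
      simp only [QPoint.elim, QPoint.glue] <;> grind
  mem_iff t := by
    simp only [hT_eq, mem_union, h₁.mem_iff, h₂.mem_iff, mem_singleton]
    constructor
    · rintro ((⟨i, rfl⟩ | ⟨i, rfl⟩) | rfl)
      · exact ⟨.cycle₁ i, by simp [QTriple.points, QPoint.elim]⟩
      · exact ⟨.cycle₂ i, by simp [QTriple.points, QPoint.elim]⟩
      · exact ⟨.bridge, by simp [QTriple.points, QPoint.elim]⟩
    · rintro ⟨i | i | _, rfl⟩
      · exact .inl (.inl ⟨i, by simp [QTriple.points, QPoint.elim]⟩)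
      · exact .inl (.inr ⟨i, by simp [QTriple.points, QPoint.elim]⟩)
      · exact .inr (by simp [QTriple.points, QPoint.elim])

theorem QPoint.range_elim (v₁ w₁ : ZMod k → α) (v₂ w₂ : ZMod l → α) (z' : α) :
    Set.range (QPoint.elim v₁ w₁ v₂ w₂ z') =
      (Set.range v₁ ∪ Set.range w₁) ∪ (Set.range v₂ ∪ Set.range w₂) ∪ {z'} := by
  ext p
  simp only [Set.mem_range, Set.mem_union, Set.mem_singleton_iff]
  constructor
  · rintro ⟨_ | _ | _ | _ | _, rfl⟩ <;> simp [elim]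
  · rintro (((⟨i, rfl⟩ | ⟨i, rfl⟩) | (⟨i, rfl⟩ | ⟨i, rfl⟩)) | rfl)
    exacts [⟨.v₁ i, rfl⟩, ⟨.w₁ i, rfl⟩, ⟨.v₂ i, rfl⟩, ⟨.w₂ i, rfl⟩, ⟨.apex, rfl⟩]

theorem IsCyclicPSTS.exists_isCycleLabelling_zero_one {C : Finset (Finset α)} {z a b : α}
    (hC : IsCyclicPSTS C) (hpsts : IsPSTS C) (hcard : #(ptsOf C) = 2 * k)
    (hmem : {z, a, b} ∈ C) (hz : #(C.filter (z ∈ ·)) = 2) (ha : #(C.filter (a ∈ ·)) = 2) :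
    ∃ v w : ZMod k → α, IsCycleLabelling C v w ∧ v 0 = z ∧ v 1 = a := by
  obtain ⟨m, v, w, h⟩ := hC.exists_isCycleLabelling hpsts (hcard ▸ even_two_mul k)
  obtain rfl : m = k := by have := h.card_ptsOf; lia
  exact h.exists_zero_one hmem (card_triple_eq_three_iff.mp (hpsts.1 _ hmem)).1 hz ha

theorem IsQ.exists_isQLabelling {n : ℕ} {T : Finset (Finset α)} {P : Finset α} {z : α}
    (h : IsQ n T P z) :
    ∃ f : QPoint (n + 2) (n + 3) → α, IsQLabelling T f ∧ Set.range f = P := by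
  obtain ⟨C₁, C₂, z', z₁', z₂', z₁, z₂, hT, hC₁, hC₂, hcard₁, hcard₂, hinter, hz₁, hz₂, hmem₁, hz₁',
    hmem₂, hz₂', hz', hT_eq, rfl⟩ := h
  obtain ⟨v₁, w₁, h₁, rfl, rfl⟩ := hC₁.exists_isCycleLabelling_zero_one (k := n + 2)
    (hT.mono (by grind)) (by lia) hmem₁ hz₁ hz₁'
  obtain ⟨v₂, w₂, h₂, hz, rfl⟩ := hC₂.exists_isCycleLabelling_zero_one (k := n + 3)
    (hT.mono (by grind)) (by lia) hmem₂ hz₂ hz₂'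
  refine ⟨_, h₁.isQLabelling h₂ hz.symm hinter hz' hT hT_eq, ?_⟩
  rw [QPoint.range_elim, ← h₁.coe_ptsOf, ← h₂.coe_ptsOf]
  push_cast
  rfl

namespace IsQLabelling

variable {T : Finset (Finset α)} {T' : Finset (Finset β)} {f : QPoint k l → α}

theorem nontrivial_left (h : IsQLabelling T f) : Nontrivial (ZMod k) :=
  have : Fact (1 < k) := ⟨Nat.lt_of_succ_lt h.three_le_left⟩
  inferInstance

theorem nontrivial_right (h : IsQLabelling T f) : Nontrivial (ZMod l) :=
  have : Fact (1 < l) := ⟨Nat.lt_of_succ_lt h.three_le_right⟩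
  inferInstance

theorem image_points_mem (h : IsQLabelling T f) (s : QTriple k l) : s.points.image f ∈ T :=
  (h.mem_iff _).mpr ⟨s, rfl⟩

theorem apply_mem_image_points_iff (h : IsQLabelling T f) {a : QPoint k l} {s : QTriple k l} :
    f a ∈ s.points.image f ↔ s ∈ a.triples := by
  have := h.nontrivial_left
  have := h.nontrivial_right
  have h1 : (1 : ZMod k) ≠ 0 := one_ne_zero
  have h1' : (1 : ZMod l) ≠ 0 := one_ne_zero
  simp only [mem_image, h.eq_iff]
  rcases a with i | i | i | i | _ <;> rcases s with j | j | _ <;>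
    simp only [QTriple.points, QPoint.triples, QPoint.glue, mem_insert, mem_singleton,
      exists_eq_or_imp, exists_eq_left] <;> grind

theorem image_points_injective (h : IsQLabelling T f) :
    Function.Injective fun s : QTriple k l ↦ s.points.image f := by
  have hown : ∀ s : QTriple k l, ∃ a : QPoint k l, a.triples = {s} := by
    rintro (i | i | _)
    exacts [⟨.w₁ i, rfl⟩, ⟨.w₂ i, rfl⟩, ⟨.apex, rfl⟩]
  intro s s' (hss' : s.points.image f = s'.points.image f)
  obtain ⟨a, ha⟩ := hown s
  have : f a ∈ s.points.image f := h.apply_mem_image_points_iff.mpr (by simp [ha])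
  rw [hss', h.apply_mem_image_points_iff, ha, mem_singleton] at this
  exact this.symm

theorem card_filter_apply_mem (h : IsQLabelling T f) (a : QPoint k l) :
    #(T.filter (f a ∈ ·)) = a.degree := by
  have hfilter : T.filter (f a ∈ ·) = a.triples.image fun s ↦ s.points.image f := by
    ext t
    simp only [mem_filter, h.mem_iff, mem_image (s := a.triples)]
    constructor
    · rintro ⟨⟨s, rfl⟩, hs⟩
      exact ⟨s, h.apply_mem_image_points_iff.mp hs, rfl⟩
    · rintro ⟨s, hs, rfl⟩
      exact ⟨⟨s, rfl⟩, h.apply_mem_image_points_iff.mpr hs⟩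
  have := h.nontrivial_left
  have := h.nontrivial_right
  rw [hfilter, card_image_of_injective _ h.image_points_injective, a.card_triples]

theorem v₁_eq_v₂_zero (h : IsQLabelling T f) : f (.v₁ 0) = f (.v₂ 0) :=
  (h.eq_iff _ _).mpr (by simp [QPoint.glue])

theorem v₁_injective (h : IsQLabelling T f) : Function.Injective fun i ↦ f (.v₁ i) := fun _ _ hij ↦
  QPoint.v₁.inj ((h.eq_iff _ _).mp hij)

theorem v₁_one_ne_v₂_one (h : IsQLabelling T f) : f (.v₁ 1) ≠ f (.v₂ 1) := fun h11 ↦ by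
  have := h.nontrivial_right
  simpa [QPoint.glue] using (h.eq_iff _ _).mp h11

theorem swap (h : IsQLabelling T f) : IsQLabelling T fun a : QPoint l k ↦ f a.swap where
  three_le_left := h.three_le_right
  three_le_right := h.three_le_left
  isPSTS := h.isPSTS
  eq_iff := by
    rintro (i | i | i | i | _) (j | j | j | j | _) <;>
      simp only [h.eq_iff, QPoint.swap, QPoint.glue] <;> grind
  mem_iff t := by
    rw [h.mem_iff]
    constructor <;> rintro ⟨i | i | _, rfl⟩
    case mp.cycle₁ | mpr.cycle₁ => exact ⟨.cycle₂ i, by simp [QTriple.points, QPoint.swap]⟩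
    case mp.cycle₂ | mpr.cycle₂ => exact ⟨.cycle₁ i, by simp [QTriple.points, QPoint.swap]⟩
    all_goals
      refine ⟨.bridge, ?_⟩
      simp only [QTriple.points, QPoint.swap, image_insert, image_singleton]
      grind

theorem comp_isAut (h : IsQLabelling T f) {g : Equiv.Perm α} (hg : IsAut T g) :
    IsQLabelling T (g ∘ f) where
  three_le_left := h.three_le_left
  three_le_right := h.three_le_right
  isPSTS := h.isPSTS
  eq_iff a b := by rw [← h.eq_iff, Function.comp, Function.comp, g.injective.eq_iff]
  mem_iff t := by
    obtain ⟨t, rfl⟩ : ∃ u, u.image g = t := ⟨t.image g.symm, by simp [image_image]⟩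
    rw [← hg t, h.mem_iff]
    simp only [← image_image, (image_injective g.injective).eq_iff]

theorem exists_iso (h : IsQLabelling T f) {f' : QPoint k l → β} (h' : IsQLabelling T' f') :
    ∃ e : α → β, Set.InjOn e (Set.range f) ∧ e ∘ f = f' ∧
      ∀ t : Finset α, (t : Set α) ⊆ Set.range f → (t ∈ T ↔ t.image e ∈ T') := by
  have hkernel : ∀ a b, f a = f b ↔ f' a = f' b := fun a b ↦ by rw [h.eq_iff, h'.eq_iff]
  let e := Function.extend f f' fun _ ↦ f' .apex
  have hef : e ∘ f = f' :=
    Function.FactorsThrough.extend_comp _ fun a b hab ↦ (hkernel a b).mp hab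
  have hinj : Set.InjOn e (Set.range f) := by
    rintro _ ⟨a, rfl⟩ _ ⟨b, rfl⟩ hab
    rw [hkernel, ← hef]
    exact hab
  refine ⟨e, hinj, hef, fun t ht ↦ ?_⟩
  rw [h.mem_iff, h'.mem_iff]
  refine exists_congr fun s ↦ ?_
  have hs : (↑(s.points.image f) : Set α) ⊆ Set.range f := by simp
  rw [← hef, ← image_image, ← coe_inj, ← hinj.image_eq_image_iff ht hs, ← coe_image, ← coe_image,
    coe_inj]

section Comparison

variable {f' : QPoint k' l' → α}

theorem degree_eq (h : IsQLabelling T f) (h' : IsQLabelling T f') {a : QPoint k l}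
    {b : QPoint k' l'} (hab : f a = f' b) : a.degree = b.degree := by
  rw [← h.card_filter_apply_mem, hab, h'.card_filter_apply_mem]

theorem exists_mem_points_degree_eq (h : IsQLabelling T f) (h' : IsQLabelling T f')
    {s : QTriple k l} {b : QPoint k' l'} (hb : f' b ∈ s.points.image f) :
    ∃ a ∈ s.points, f a = f' b ∧ a.degree = b.degree := by
  obtain ⟨a, ha, hab⟩ := mem_image.mp hb
  exact ⟨a, ha, hab, h.degree_eq h' hab⟩

theorem exists_degree_eq (h : IsQLabelling T f) (h' : IsQLabelling T f') (b : QPoint k' l') :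
    ∃ a, f a = f' b ∧ a.degree = b.degree := by
  obtain ⟨t, ht⟩ : (T.filter (f' b ∈ ·)).Nonempty := card_pos.mp <| by
    rw [h'.card_filter_apply_mem]
    exact b.degree_pos
  obtain ⟨htT, hbt⟩ := mem_filter.mp ht
  obtain ⟨s, rfl⟩ := (h.mem_iff t).mp htT
  obtain ⟨a, -, ha⟩ := h.exists_mem_points_degree_eq h' hbt
  exact ⟨a, ha⟩

theorem v₁_succ_eq_and_w₁_eq (h : IsQLabelling T f) (h' : IsQLabelling T f') {i : ZMod k}
    {j : ZMod k'} (hv : f (.v₁ i) = f' (.v₁ j))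
    (hcycle : (QTriple.cycle₁ i).points.image f = (QTriple.cycle₁ j).points.image f') :
    f (.v₁ (i + 1)) = f' (.v₁ (j + 1)) ∧ f (.w₁ i) = f' (.w₁ j) := by
  constructor
  · obtain ⟨a, ha, hab, hdeg⟩ := h.exists_mem_points_degree_eq h' (s := .cycle₁ i)
      (b := .v₁ (j + 1)) (by rw [hcycle]; exact mem_image_of_mem f' (by simp [QTriple.points]))
    have hne : f' (.v₁ j) ≠ f' (.v₁ (j + 1)) :=
      have := h'.nontrivial_left
      h'.v₁_injective.ne (succ_ne_self j).symm
    grind [QTriple.points, QPoint.degree]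
  · obtain ⟨a, ha, hab, hdeg⟩ := h.exists_mem_points_degree_eq h' (s := .cycle₁ i)
      (b := .w₁ j) (by rw [hcycle]; exact mem_image_of_mem f' (by simp [QTriple.points]))
    grind [QTriple.points, QPoint.degree]

theorem image_cycle₁_succ_eq (h : IsQLabelling T f) (h' : IsQLabelling T f')
    (hbridge : QTriple.bridge.points.image f = QTriple.bridge.points.image f') {i : ZMod k}
    {j : ZMod k'} (hi : i + 1 ≠ 0) (hv : f (.v₁ (i + 1)) = f' (.v₁ (j + 1)))
    (hcycle : (QTriple.cycle₁ i).points.image f = (QTriple.cycle₁ j).points.image f') :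
    (QTriple.cycle₁ (i + 1)).points.image f = (QTriple.cycle₁ (j + 1)).points.image f' := by
  obtain ⟨s, hs⟩ := (h'.mem_iff _).mp (h.image_points_mem (.cycle₁ (i + 1)))
  have hne_cycle : s ≠ .cycle₁ j := by
    rintro rfl
    have := h.nontrivial_left
    exact succ_ne_self i (QTriple.cycle₁.inj (h.image_points_injective (hs.trans hcycle.symm)))
  have hne_bridge : s ≠ .bridge := by
    rintro rfl
    simpa using h.image_points_injective (hs.trans hbridge.symm)
  have hj : j + 1 ≠ 0 := fun hj ↦ by
    have := h.degree_eq h' hv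
    grind [QPoint.degree]
  have hmem : s ∈ (QPoint.v₁ (j + 1) : QPoint k' l').triples := by
    rw [← h'.apply_mem_image_points_iff, ← hs, ← hv]
    simp [QTriple.points]
  obtain rfl : s = .cycle₁ (j + 1) := by
    simp only [QPoint.triples, if_neg hj] at hmem
    split_ifs at hmem <;> simp_all
  exact hs

theorem v₁_natCast_eq (h : IsQLabelling T f) (h' : IsQLabelling T f')
    (h0 : f (.v₁ 0) = f' (.v₁ 0)) (h1 : f (.v₁ 1) = f' (.v₁ 1))
    (hbridge : QTriple.bridge.points.image f = QTriple.bridge.points.image f') (i : ℕ)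
    (hi : i < k) :
    f (.v₁ i) = f' (.v₁ i) ∧ f (.v₁ (i + 1)) = f' (.v₁ (i + 1)) ∧ f (.w₁ i) = f' (.w₁ i) := by
  suffices hcycle : f (.v₁ i) = f' (.v₁ i) ∧
      (QTriple.cycle₁ (i : ZMod k)).points.image f = (QTriple.cycle₁ (i : ZMod k')).points.image f'
    from ⟨hcycle.1, h.v₁_succ_eq_and_w₁_eq h' hcycle.1 hcycle.2⟩
  induction i with
  | zero =>
    have := h.nontrivial_left
    refine ⟨by simpa using h0, h.isPSTS.2 _ _ (h.v₁_injective.ne one_ne_zero)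
      _ (h.image_points_mem _) _ (h'.image_points_mem _) ?_ ?_ ?_ ?_⟩
    · simp [QTriple.points]
    · simp [QTriple.points]
    · simp [QTriple.points, h1]
    · simp [QTriple.points, h0]
  | succ i ih =>
    obtain ⟨hv, hcycle⟩ := ih (by lia)
    have hi0 : (i + 1 : ZMod k) ≠ 0 := mod_cast zmod_natCast_ne_zero i.succ_ne_zero hi
    have hv_succ := (h.v₁_succ_eq_and_w₁_eq h' hv hcycle).1
    push_cast
    exact ⟨hv_succ, h.image_cycle₁_succ_eq h' hbridge hi0 hv_succ hcycle⟩

/- After `k` steps along its cycle the first labelling is back at `z`, hence so is the second. -/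
theorem dvd_of_v₁_eq (h : IsQLabelling T f) (h' : IsQLabelling T f')
    (h0 : f (.v₁ 0) = f' (.v₁ 0)) (h1 : f (.v₁ 1) = f' (.v₁ 1))
    (hbridge : QTriple.bridge.points.image f = QTriple.bridge.points.image f') : k' ∣ k := by
  have hk := h.three_le_left
  obtain ⟨-, hlast, -⟩ := h.v₁_natCast_eq h' h0 h1 hbridge (k - 1) (by lia)
  have hcast (R : Type) [Ring R] : ((k - 1 : ℕ) + 1 : R) = k := by
    rw [← Nat.cast_succ, Nat.succ_eq_add_one, Nat.sub_add_cancel (by lia)]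
  rw [hcast, hcast, ZMod.natCast_self, h0] at hlast
  exact (ZMod.natCast_eq_zero_iff k k').mp (h'.v₁_injective hlast).symm

end Comparison

variable {f' : QPoint k l → α}

theorem v₁_eq_and_w₁_eq (h : IsQLabelling T f) (h' : IsQLabelling T f')
    (h0 : f (.v₁ 0) = f' (.v₁ 0)) (h1 : f (.v₁ 1) = f' (.v₁ 1))
    (hbridge : QTriple.bridge.points.image f = QTriple.bridge.points.image f') (i : ZMod k) :
    f (.v₁ i) = f' (.v₁ i) ∧ f (.w₁ i) = f' (.w₁ i) := by
  have : NeZero k := ⟨by have := h.three_le_left; lia⟩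
  have := h.v₁_natCast_eq h' h0 h1 hbridge i.val i.val_lt
  rw [ZMod.natCast_zmod_val] at this
  exact ⟨this.1, this.2.2⟩

theorem v₁_zero_eq (h : IsQLabelling T f) (h' : IsQLabelling T f') :
    f (.v₁ 0) = f' (.v₁ 0) := by
  obtain ⟨a, ha, hdeg⟩ := h.exists_degree_eq h' (.v₁ 0)
  obtain rfl | rfl := QPoint.eq_v₁_or_eq_v₂_of_degree_eq_four (hdeg.trans (if_pos rfl))
  · exact ha
  · exact h.v₁_eq_v₂_zero.trans ha

theorem one_eq_or_swap (h : IsQLabelling T f) (h' : IsQLabelling T f') :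
    f (.v₁ 1) = f' (.v₁ 1) ∧ f (.v₂ 1) = f' (.v₂ 1) ∨
      f (.v₂ 1) = f' (.v₁ 1) ∧ f (.v₁ 1) = f' (.v₂ 1) := by
  obtain ⟨a, ha, hdega⟩ := h.exists_degree_eq h' (.v₁ 1)
  obtain ⟨b, hb, hdegb⟩ := h.exists_degree_eq h' (.v₂ 1)
  have hne := h'.v₁_one_ne_v₂_one
  have := h.nontrivial_left
  have := h.nontrivial_right
  obtain rfl | rfl :=
    QPoint.eq_v₁_or_eq_v₂_of_degree_eq_three (hdega.trans (by simp [QPoint.degree])) <;>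
  obtain rfl | rfl :=
    QPoint.eq_v₁_or_eq_v₂_of_degree_eq_three (hdegb.trans (by simp [QPoint.degree])) <;>
  grind

theorem image_bridge_eq (h : IsQLabelling T f) (h' : IsQLabelling T f') :
    QTriple.bridge.points.image f = QTriple.bridge.points.image f' := by
  refine h.isPSTS.2 _ _ h.v₁_one_ne_v₂_one _ (h.image_points_mem _) _ (h'.image_points_mem _)
    ?_ ?_ ?_ ?_ <;>
  obtain ⟨h₁, h₂⟩ | ⟨h₁, h₂⟩ := h.one_eq_or_swap h' <;> simp [QTriple.points, *]

theorem apex_eq (h : IsQLabelling T f) (h' : IsQLabelling T f') : f .apex = f' .apex := by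
  obtain ⟨a, ha, haf, hdeg⟩ := h.exists_mem_points_degree_eq h' (s := .bridge) (b := .apex)
    (by rw [h.image_bridge_eq h']; exact mem_image_of_mem f' (by simp [QTriple.points]))
  grind [QTriple.points, QPoint.degree]

theorem v₁_one_eq_and_v₂_one_eq (hkl : k ≠ l) (h : IsQLabelling T f) (h' : IsQLabelling T f') :
    f (.v₁ 1) = f' (.v₁ 1) ∧ f (.v₂ 1) = f' (.v₂ 1) := by
  refine (h.one_eq_or_swap h').resolve_right fun ⟨h1, _⟩ ↦ hkl ?_
  have h0 := h.v₁_eq_v₂_zero.symm.trans (h.v₁_zero_eq h')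
  have hbridge : QTriple.bridge.points.image (fun a : QPoint l k ↦ f a.swap) =
      QTriple.bridge.points.image f' := by
    rw [← h.image_bridge_eq h']
    simp only [QTriple.points, QPoint.swap, image_insert, image_singleton]
    grind
  exact Nat.dvd_antisymm (h.swap.dvd_of_v₁_eq h' h0 h1 hbridge)
    (h'.dvd_of_v₁_eq h.swap h0.symm h1.symm hbridge.symm)

theorem unique (hkl : k ≠ l) (h : IsQLabelling T f) (h' : IsQLabelling T f') : f = f' := by
  obtain ⟨h1, h1'⟩ := v₁_one_eq_and_v₂_one_eq hkl h h'
  have h0 := h.v₁_zero_eq h'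
  have h0' := h.v₁_eq_v₂_zero.symm.trans (h0.trans h'.v₁_eq_v₂_zero)
  have h₁ := h.v₁_eq_and_w₁_eq h' h0 h1 (h.image_bridge_eq h')
  have h₂ := h.swap.v₁_eq_and_w₁_eq h'.swap h0' h1' (h.swap.image_bridge_eq h'.swap)
  funext a
  cases a with
  | v₁ i => exact (h₁ i).1
  | w₁ i => exact (h₁ i).2
  | v₂ i => exact (h₂ i).1
  | w₂ i => exact (h₂ i).2
  | apex => exact h.apex_eq h'

end IsQLabelling

end QLabellings

theorem stmt19_general {β γ : Type*} (n : ℕ) (T : Finset (Finset β)) (P : Finset β) (z : β)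
    (T' : Finset (Finset γ)) (P' : Finset γ) (z' : γ)
    (hQ : IsQ n T P z) (hQ' : IsQ n T' P' z') :
    (∃ e : β → γ, Set.InjOn e ↑P ∧ P.image e = P' ∧
      ∀ t : Finset β, t ⊆ P → (t ∈ T ↔ t.image e ∈ T')) ∧
    ∀ g : Equiv.Perm β, IsAut T g → ∀ x ∈ P, g x = x := by
  obtain ⟨f, hf, hP⟩ := hQ.exists_isQLabelling
  obtain ⟨f', hf', hP'⟩ := hQ'.exists_isQLabelling
  constructor
  · obtain ⟨e, hinj, hef, htriples⟩ := hf.exists_iso hf'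
    rw [hP] at hinj htriples
    refine ⟨e, hinj, coe_injective ?_, fun t ht ↦ htriples t (mod_cast ht)⟩
    rw [coe_image, ← hP, ← hP', ← Set.range_comp, hef]
  · intro g hg x hx
    obtain ⟨a, rfl⟩ := hP.superset hx
    exact congrFun ((hf.comp_isAut hg).unique (by lia) hf) a

/-- **Section 4.1 (properties of `Q(z)`).** For every `n ≥ 1`, any two partial
Steiner triple systems satisfying the defining conditions of `Q(z)` are isomorphic,
and every such PSTS has trivial automorphism group. -/
theorem stmt19 {β γ : Type*} [Fintype β] [Fintype γ] (n : ℕ) (hn : 1 ≤ n)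
    (T : Finset (Finset β)) (P : Finset β) (z : β)
    (T' : Finset (Finset γ)) (P' : Finset γ) (z' : γ)
    (hQ : IsQ n T P z) (hQ' : IsQ n T' P' z') :
    (∃ e : β → γ, Set.InjOn e ↑P ∧ P.image e = P' ∧
      ∀ t : Finset β, t ⊆ P → (t ∈ T ↔ t.image e ∈ T')) ∧
    ∀ g : Equiv.Perm β, P.image g = P →
      (∀ t : Finset β, t ∈ T ↔ t.image g ∈ T) → ∀ x ∈ P, g x = x := by
  have h := stmt19_general n T P z T' P' z' hQ hQ'
  exact ⟨h.1, fun g _ ↦ h.2 g⟩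

end
end
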